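/- Let a ≥ b ≥ k ≥ 1 with n ≥ a+b. Then the cokernel of ψ_k: Λ^a⊗Λ^b → Λ^a⊗Λ^b is isomorphic as a G-module to the Schur module L_{(a,b)} if and only if Σ_{t=1}^{j} (−1)^{t−1} C(b−t,b−k) C(j,t) C(a−b+j+t,t) ≠ 0 for all j = 1,…,b. -/

import Mathlib

open TensorProduct

set_option synthInstance.maxHeartbeats 1000000
set_option maxSynthPendingDepth 3
set_option maxHeartbeats 1000000

noncomputable section

namespace MMS

variable (K : Type) [Field K] [CharZero K] (n : ℕ)

/-- `V = K^n`, the natural module of `G = GL(n,K)`. -/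
abbrev V : Type := Fin n → K

/-- `Λ^p`, the `p`-th exterior power of `V`. -/
abbrev Lam (p : ℕ) : Type := ⋀[K]^p (V K n)

/-- The wedge `v_1 ∧ ⋯ ∧ v_p ∈ Λ^p`. -/
def wedge {p : ℕ} (v : Fin p → V K n) : Lam K n p :=
  ⟨ExteriorAlgebra.ιMulti K p v, ExteriorAlgebra.ιMulti_range K p (Set.mem_range_self v)⟩

/-- Transport along an equality of degrees. -/
def ecast {p q : ℕ} (h : p = q) : Lam K n p ≃ₗ[K] Lam K n q :=
  h ▸ LinearEquiv.refl K (Lam K n p)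

/-- `m` is the wedge multiplication map `Λ^p ⊗ Λ^q → Λ^{p+q}`. -/
def IsMulMap (p q : ℕ) (m : Lam K n p ⊗[K] Lam K n q →ₗ[K] Lam K n (p+q)) : Prop :=
  ∀ (v : Fin p → V K n) (w : Fin q → V K n),
    m (wedge K n v ⊗ₜ[K] wedge K n w) = wedge K n (Fin.append v w)

/-- The set of `(p,q)`-shuffles: permutations `σ` of `{1, …, p+q}` which are strictly
increasing on the first `p` and on the last `q` indices. -/
def shuffles (p q : ℕ) : Finset (Equiv.Perm (Fin (p+q))) :=
  Finset.univ.filter (fun σ =>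
    (∀ i j : Fin (p+q), i < j → (j : ℕ) < p → σ i < σ j) ∧
    (∀ i j : Fin (p+q), i < j → p ≤ (i : ℕ) → σ i < σ j))

/-- `D` is the component `Δ_{p,q} : Λ^{p+q} → Λ^p ⊗ Λ^q` of the comultiplication, i.e.
`Δ_{p,q}(v_1 ∧ ⋯ ∧ v_{p+q}) = Σ_σ sgn(σ) (v_{σ(1)} ∧ ⋯ ∧ v_{σ(p)}) ⊗ (v_{σ(p+1)} ∧ ⋯ ∧ v_{σ(p+q)})`,
the sum being over all `(p,q)`-shuffles. -/
def IsComulMap (p q : ℕ) (D : Lam K n (p+q) →ₗ[K] Lam K n p ⊗[K] Lam K n q) : Prop :=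
  ∀ v : Fin (p+q) → V K n,
    D (wedge K n v) =
      ∑ σ ∈ shuffles p q,
        (Equiv.Perm.sign σ : ℤ) •
          (wedge K n (fun i => v (σ (Fin.castAdd q i))) ⊗ₜ[K]
            wedge K n (fun i => v (σ (Fin.natAdd p i))))

variable (mf : ∀ p q : ℕ, Lam K n p ⊗[K] Lam K n q →ₗ[K] Lam K n (p+q))
variable (Df : ∀ p q : ℕ, Lam K n (p+q) →ₗ[K] Lam K n p ⊗[K] Lam K n q)

/-- The map `δ_t = (m ⊗ 1) ∘ (1 ⊗ Δ_{t,b-t}) : Λ^a ⊗ Λ^b → Λ^{a+t} ⊗ Λ^{b-t}`. -/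
def deltaMap (a b t : ℕ) (ht : t ≤ b) :
    Lam K n a ⊗[K] Lam K n b →ₗ[K] Lam K n (a+t) ⊗[K] Lam K n (b-t) :=
  (TensorProduct.map (mf a t) LinearMap.id)
    ∘ₗ (TensorProduct.assoc K (Lam K n a) (Lam K n t) (Lam K n (b-t))).symm.toLinearMap
    ∘ₗ (TensorProduct.map LinearMap.id
        ((Df t (b-t)) ∘ₗ (ecast K n (by omega : b = t + (b-t))).toLinearMap))

/-- The map `θ_t = (1 ⊗ m) ∘ (Δ_{a-t,t} ⊗ 1) : Λ^a ⊗ Λ^b → Λ^{a-t} ⊗ Λ^{b+t}`. -/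
def thetaMap (a b t : ℕ) (ht : t ≤ a) :
    Lam K n a ⊗[K] Lam K n b →ₗ[K] Lam K n (a-t) ⊗[K] Lam K n (b+t) :=
  (TensorProduct.map LinearMap.id
      ((ecast K n (by omega : t + b = b + t)).toLinearMap ∘ₗ mf t b))
    ∘ₗ (TensorProduct.assoc K (Lam K n (a-t)) (Lam K n t) (Lam K n b)).toLinearMap
    ∘ₗ (TensorProduct.map
        ((Df (a-t) t) ∘ₗ (ecast K n (by omega : a = (a-t) + t)).toLinearMap) LinearMap.id)

/-- The map `Φ_t = θ_t ∘ δ_t : Λ^a ⊗ Λ^b → Λ^a ⊗ Λ^b`. -/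
def PhiMap (a b t : ℕ) (hta : t ≤ a) (htb : t ≤ b) :
    Lam K n a ⊗[K] Lam K n b →ₗ[K] Lam K n a ⊗[K] Lam K n b :=
  (TensorProduct.congr (ecast K n (by omega : a + t - t = a))
      (ecast K n (by omega : b - t + t = b))).toLinearMap
    ∘ₗ thetaMap K n mf Df (a+t) (b-t) t (by omega)
    ∘ₗ deltaMap K n mf Df a b t htb

/-- The map `Φ_t`, extended by `0` to all `t`. -/
def PhiMap' (a b t : ℕ) :
    Lam K n a ⊗[K] Lam K n b →ₗ[K] Lam K n a ⊗[K] Lam K n b :=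
  if h : t ≤ a ∧ t ≤ b then PhiMap K n mf Df a b t h.1 h.2 else 0

/-- The map `θ_1 : Λ^{a+1} ⊗ Λ^{b-1} → Λ^a ⊗ Λ^b` (for `b ≥ 1`). -/
def theta1 (a b : ℕ) (hb : 1 ≤ b) :
    Lam K n (a+1) ⊗[K] Lam K n (b-1) →ₗ[K] Lam K n a ⊗[K] Lam K n b :=
  (TensorProduct.congr (ecast K n (by omega : a + 1 - 1 = a))
      (ecast K n (by omega : b - 1 + 1 = b))).toLinearMap
    ∘ₗ thetaMap K n mf Df (a+1) (b-1) 1 (by omega)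

/-- The submodule of relations defining the Schur module `L_{(a,b)}`: the image of
`θ_1` if `b ≥ 1`, and `0` if `b = 0`. -/
def schurRel (a b : ℕ) : Submodule K (Lam K n a ⊗[K] Lam K n b) :=
  if hb : 1 ≤ b then LinearMap.range (theta1 K n mf Df a b hb) else ⊥

/-- The Schur module `L_{(a,b)}`, realized as the cokernel of `θ_1` (in characteristic zero). -/
abbrev SchurL (a b : ℕ) : Type :=
  (Lam K n a ⊗[K] Lam K n b) ⧸ schurRel K n mf Df a b

/-- The projection `π_{(a,b)} : Λ^a ⊗ Λ^b → L_{(a,b)}`. -/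
def schurProj (a b : ℕ) : Lam K n a ⊗[K] Lam K n b →ₗ[K] SchurL K n mf Df a b :=
  (schurRel K n mf Df a b).mkQ

/-- The coefficient `c_t(a,b,i) = C(i,t)·C(a-b+t+i,t)`. -/
def cCoef (a b t i : ℕ) : ℕ := (i.choose t) * ((a-b+t+i).choose t)

/-- The group `G = GL(n,K)`. -/
abbrev GLn : Type := Matrix.GeneralLinearGroup (Fin n) K

/-- `rho` is the family of natural actions of `G = GL(n,K)` on the exterior powers `Λ^p`
of the natural module `V = K^n`. -/
def IsExtAction (rho : ∀ p : ℕ, GLn K n → (Lam K n p →ₗ[K] Lam K n p)) : Prop :=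
  ∀ (p : ℕ) (g : GLn K n) (v : Fin p → V K n),
    rho p g (wedge K n v) =
      wedge K n (fun i => Matrix.toLin' (g : Matrix (Fin n) (Fin n) K) (v i))

/-- The action of `g ∈ GL(n,K)` on `Λ^a ⊗ Λ^b`. -/
def rhoT (rho : ∀ p : ℕ, GLn K n → (Lam K n p →ₗ[K] Lam K n p)) (a b : ℕ) (g : GLn K n) :
    Lam K n a ⊗[K] Lam K n b →ₗ[K] Lam K n a ⊗[K] Lam K n b :=
  TensorProduct.map (rho a g) (rho b g)

/-- The quotients `M₁ ⧸ N₁` and `M₂ ⧸ N₂` are isomorphic as representations, with respect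
to the given actions `ρ₁, ρ₂` on `M₁` and `M₂` (which descend to the quotients). -/
def IsQuotIso {G' : Type} {M₁ M₂ : Type} [AddCommGroup M₁] [Module K M₁]
    [AddCommGroup M₂] [Module K M₂]
    (N₁ : Submodule K M₁) (N₂ : Submodule K M₂)
    (ρ₁ : G' → M₁ →ₗ[K] M₁) (ρ₂ : G' → M₂ →ₗ[K] M₂) : Prop :=
  ∃ e : (M₁ ⧸ N₁) ≃ₗ[K] (M₂ ⧸ N₂),
    ∀ (g : G') (x : M₁) (y : M₂),
      e (Submodule.Quotient.mk x) = Submodule.Quotient.mk y →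
      e (Submodule.Quotient.mk (ρ₁ g x)) = Submodule.Quotient.mk (ρ₂ g y)

/-- The "multiply in pairs" map
`(Λ^{p₁} ⊗ Λ^{q₁}) ⊗ (Λ^{p₂} ⊗ Λ^{q₂}) → Λ^{p₁+p₂} ⊗ Λ^{q₁+q₂}`. -/
def pairMul (p₁ q₁ p₂ q₂ : ℕ) :
    (Lam K n p₁ ⊗[K] Lam K n q₁) ⊗[K] (Lam K n p₂ ⊗[K] Lam K n q₂) →ₗ[K]
      Lam K n (p₁+p₂) ⊗[K] Lam K n (q₁+q₂) :=
  (TensorProduct.map (mf p₁ p₂) (mf q₁ q₂))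
    ∘ₗ (TensorProduct.tensorTensorTensorComm K (Lam K n p₁) (Lam K n q₁)
        (Lam K n p₂) (Lam K n q₂)).toLinearMap

/-- The map `φ_k = (m ⊗ m) ∘ (1 ⊗ τ ⊗ 1) ∘ (Δ_{a-k,k} ⊗ Δ_{k,b-k}) : Λ^a ⊗ Λ^b → Λ^a ⊗ Λ^b`. -/
def phiSmall (a b k : ℕ) (hka : k ≤ a) (hkb : k ≤ b) :
    Lam K n a ⊗[K] Lam K n b →ₗ[K] Lam K n a ⊗[K] Lam K n b :=
  (TensorProduct.congr (ecast K n (by omega : (a-k) + k = a))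
      (ecast K n (by omega : k + (b-k) = b))).toLinearMap
    ∘ₗ pairMul K n mf (a-k) k k (b-k)
    ∘ₗ (TensorProduct.map
        ((Df (a-k) k) ∘ₗ (ecast K n (by omega : a = (a-k) + k)).toLinearMap)
        ((Df k (b-k)) ∘ₗ (ecast K n (by omega : b = k + (b-k))).toLinearMap))

/-- The map `ψ_k = C(b,k)·1 - φ_k : Λ^a ⊗ Λ^b → Λ^a ⊗ Λ^b`. -/
def psiSmall (a b k : ℕ) (hka : k ≤ a) (hkb : k ≤ b) :
    Lam K n a ⊗[K] Lam K n b →ₗ[K] Lam K n a ⊗[K] Lam K n b :=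
  (Nat.choose b k : K) • LinearMap.id - phiSmall K n mf Df a b k hka hkb

/-- The map `β_k = (m ⊗ m) ∘ (1 ⊗ τ ⊗ 1) ∘ (Δ_{a-k,k} ⊗ 1 ⊗ 1) : Λ^a ⊗ (Λ^k ⊗ Λ^{b-k}) → Λ^a ⊗ Λ^b`. -/
def betaMap (a b k : ℕ) (hka : k ≤ a) (hkb : k ≤ b) :
    Lam K n a ⊗[K] (Lam K n k ⊗[K] Lam K n (b-k)) →ₗ[K] Lam K n a ⊗[K] Lam K n b :=
  (TensorProduct.congr (ecast K n (by omega : (a-k) + k = a))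
      (ecast K n (by omega : k + (b-k) = b))).toLinearMap
    ∘ₗ pairMul K n mf (a-k) k k (b-k)
    ∘ₗ (TensorProduct.map
        ((Df (a-k) k) ∘ₗ (ecast K n (by omega : a = (a-k) + k)).toLinearMap)
        LinearMap.id)

/-- The map `γ_k : Λ^a ⊗ (Λ^k ⊗ Λ^{b-k}) → Λ^a ⊗ Λ^b`,
`γ_k(x ⊗ y ⊗ z) = x ⊗ (y ∧ z) - β_k(x ⊗ y ⊗ z)`. -/
def gammaMap (a b k : ℕ) (hka : k ≤ a) (hkb : k ≤ b) :
    Lam K n a ⊗[K] (Lam K n k ⊗[K] Lam K n (b-k)) →ₗ[K] Lam K n a ⊗[K] Lam K n b :=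
  (TensorProduct.map LinearMap.id
      ((ecast K n (by omega : k + (b-k) = b)).toLinearMap ∘ₗ mf k (b-k)))
    - betaMap K n mf Df a b k hka hkb

/-- The quantity `d_k(a,b,t)` (for the given `i`), from Lemma 5.3 of the paper. -/
def dInt (a b k i t : ℕ) : ℤ :=
  1 - ∑ j ∈ Finset.Icc (i - min (b-k) i) t,
        (-1:ℤ)^j * ((a-k+j).choose (a-k) : ℤ) * ((b-k+t-i).choose (t-j) : ℤ)

end MMS

namespace MMS

/-!
On `Λ(V ⊕ V) = Λ V ⊗ Λ V` the polarizations `(x, y) ↦ (y, 0)` and `(x, y) ↦ (0, x)` act as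
derivations `e` and `f`, which generate an action of `sl₂`; on `Λ^p ⊗ Λ^q` the element `h` is the
scalar `p - q`. Then `θ_1` is `f`, and `(-1) ^ r φ_r` applies `f ^ r / r!` to the first factor and
`e ^ r / r!` to the second. Hence `f ^ t / t! * e ^ t / t!` is a combination of the `(-1) ^ r φ_r`
with binomial coefficients, and inverting these relations writes `ψ_k` as the sum over `t ≥ 1` of
`(-1) ^ (t - 1) C(b - t, b - k) f ^ t / t! * e ^ t / t!`.

The space `Λ^a ⊗ Λ^b` is spanned by the vectors `f ^ j / j! * v`, where `v` in
`Λ^(a + j) ⊗ Λ^(b - j)` is killed by `e`. On such a vector `ψ_k` is the scalar of the theorem, an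
empty sum for `j = 0`, while the image of `θ_1` is spanned by the vectors with `j ≥ 1`. So the image
of `ψ_k` is contained in that of `θ_1`, with equality if and only if the scalar is nonzero for each
`j ≥ 1` such that some `v ≠ 0` exists, that is, such that `a + j ≤ n`. By dimension, an isomorphism
of the cokernels forces this equality.
-/

section DividedPower

variable (K : Type*) [Field K] {A : Type*} [Ring A] [Algebra K A]

/-- The divided power `x ^ t / t!` of an element of an algebra over a field. -/
def divPow (x : A) (t : ℕ) : A := (t.factorial : K)⁻¹ • x ^ t

lemma divPow_zero (x : A) : divPow K x 0 = 1 := by simp [divPow]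

lemma divPow_succ (x : A) (t : ℕ) :
    divPow K x (t + 1) = ((t : K) + 1)⁻¹ • (x * divPow K x t) := by
  rw [divPow, divPow, mul_smul_comm, ← pow_succ', smul_smul, Nat.factorial_succ, Nat.cast_mul,
    mul_inv, Nat.cast_succ]

lemma divPow_succ' (x : A) (t : ℕ) :
    divPow K x (t + 1) = ((t : K) + 1)⁻¹ • (divPow K x t * x) := by
  rw [divPow_succ, divPow, mul_smul_comm, smul_mul_assoc, ← pow_succ, ← pow_succ']

lemma divPow_succ_apply_eq_zero {B : Type*} [AddCommGroup B] [Module K B] {e : Module.End K B}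
    {v : B} (hv : e v = 0) (t : ℕ) : divPow K e (t + 1) v = 0 := by
  rw [divPow_succ', LinearMap.smul_apply, Module.End.mul_apply, hv, map_zero, smul_zero]

variable [CharZero K]

lemma mul_divPow (x : A) (t : ℕ) :
    x * divPow K x t = ((t : K) + 1) • divPow K x (t + 1) := by
  rw [divPow_succ, smul_inv_smul₀ (by exact_mod_cast t.succ_ne_zero)]

lemma divPow_mul_divPow (x : A) (s t : ℕ) :
    divPow K x s * divPow K x t = ((s + t).choose s : K) • divPow K x (s + t) := by
  have hst : ((s + t).factorial : K) ≠ 0 := by exact_mod_cast (s + t).factorial_ne_zero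
  rw [divPow, divPow, divPow, smul_mul_assoc, mul_smul_comm, smul_smul, smul_smul, ← pow_add,
    Nat.cast_add_choose, div_eq_mul_inv, mul_right_comm, mul_inv_cancel₀ hst, one_mul, mul_inv]

end DividedPower

section Sl2

attribute [local instance] LieRing.ofAssociativeRing

variable {K : Type*} [Field K] [CharZero K] {B : Type*} [AddCommGroup B] [Module K B]
  {h e f : Module.End K B} {v : B}

lemma apply_divPow_succ_of_isSl2Triple (hsl : IsSl2Triple h e f) {μ : K} (hh : h v = μ • v)
    (he : e v = 0) (j : ℕ) : e (divPow K f (j + 1) v) = (μ - j) • divPow K f j v := by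
  rcases eq_or_ne v 0 with rfl | hv
  · simp
  have hprim : hsl.HasPrimitiveVectorWith v μ := ⟨hv, hh, he⟩
  have hpow := hprim.lie_e_pow_succ_toEnd_f j
  simp only [LieModule.toEnd_module_end, LieHom.id_apply, Module.End.lie_apply] at hpow
  have hj : (j : K) + 1 ≠ 0 := by exact_mod_cast j.succ_ne_zero
  rw [divPow, divPow, LinearMap.smul_apply, LinearMap.smul_apply, map_smul, hpow, smul_smul,
    smul_smul, Nat.factorial_succ]
  congr 1
  push_cast
  field_simp

lemma divPow_apply_divPow_of_isSl2Triple (hsl : IsSl2Triple h e f) {m : ℕ}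
    (hh : h v = (m : K) • v) (he : e v = 0) (t i : ℕ) (hti : t + i ≤ m) :
    divPow K e t (divPow K f (t + i) v) = ((m - i).choose t : K) • divPow K f i v := by
  induction t generalizing i with
  | zero => simp [divPow_zero]
  | succ t ih =>
    obtain ⟨d, rfl⟩ : ∃ d, m = d + i + 1 := ⟨m - i - 1, by lia⟩
    have ht : (t : K) + 1 ≠ 0 := by exact_mod_cast t.succ_ne_zero
    have hchoose : ((d : K) + 1) * d.choose t = (d + 1).choose (t + 1) * (t + 1) := by
      exact_mod_cast Nat.add_one_mul_choose_eq d t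
    rw [add_right_comm, add_assoc, divPow_succ, LinearMap.smul_apply, Module.End.mul_apply,
      ih (i + 1) (by lia), map_smul, apply_divPow_succ_of_isSl2Triple hsl hh he, smul_smul,
      smul_smul, show d + i + 1 - (i + 1) = d by lia, show d + i + 1 - i = d + 1 by lia]
    congr 1
    push_cast
    field_simp
    linear_combination hchoose

lemma divPow_apply_divPow_apply_divPow_of_isSl2Triple (hsl : IsSl2Triple h e f) {m j : ℕ}
    (hh : h v = (m : K) • v) (he : e v = 0) (hjm : j ≤ m) (t : ℕ) :
    divPow K f t (divPow K e t (divPow K f j v)) =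
      ((j.choose t : K) * ((m - j + t).choose t : K)) • divPow K f j v := by
  rcases le_or_gt t j with htj | hjt
  · obtain ⟨i, rfl⟩ := Nat.exists_eq_add_of_le htj
    rw [divPow_apply_divPow_of_isSl2Triple hsl hh he t i hjm, map_smul, ← Module.End.mul_apply,
      divPow_mul_divPow, LinearMap.smul_apply, smul_smul, mul_comm,
      show m - (t + i) + t = m - i by lia]
  · obtain ⟨d, rfl⟩ := Nat.exists_eq_add_of_lt hjt
    have hej : divPow K e j (divPow K f j v) = (m.choose j : K) • v := by
      simpa [divPow_zero] using
        divPow_apply_divPow_of_isSl2Triple hsl hh he j 0 (by rwa [add_zero])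
    have hchoose : ((d + 1 + j).choose (d + 1) : K) ≠ 0 := by
      exact_mod_cast (Nat.choose_pos (by lia)).ne'
    have hzero : divPow K e (d + 1 + j) (divPow K f j v) = 0 := by
      rw [← smul_eq_zero_iff_right hchoose, ← LinearMap.smul_apply, ← divPow_mul_divPow,
        Module.End.mul_apply, hej, map_smul, divPow_succ_apply_eq_zero K he, smul_zero]
    rw [show j + d + 1 = d + 1 + j by lia, hzero, map_zero,
      Nat.choose_eq_zero_of_lt (show j < d + 1 + j by lia), Nat.cast_zero, zero_mul, zero_smul]

end Sl2

section BigradedSl2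

attribute [local instance] LieRing.ofAssociativeRing

variable {K : Type*} [Field K] {B : Type*} [AddCommGroup B] [Module K B]

/-- A family of subspaces `W p q`, with `h` acting on `W p q` as the scalar `p - q`, which an
`sl₂`-triple `h`, `e`, `f` permutes in the way the polarization operators permute the bihomogeneous
components of an algebra: `e` raises `p` and lowers `q`, and `f` does the opposite. -/
structure IsBigradedSl2 (h e f : Module.End K B) (W : ℕ → ℕ → Submodule K B) : Prop where
  isSl2Triple : IsSl2Triple h e f
  h_apply {p q : ℕ} {w : B} : w ∈ W p q → h w = ((p : K) - q) • w
  e_mem {p q : ℕ} {w : B} : w ∈ W p (q + 1) → e w ∈ W (p + 1) q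
  f_mem {p q : ℕ} {w : B} : w ∈ W (p + 1) q → f w ∈ W p (q + 1)
  e_apply_eq_zero {p : ℕ} {w : B} : w ∈ W p 0 → e w = 0

/-- The vectors of bidegree `(p, q)` of the form `f ^ i / i! • v`, where `v` is bihomogeneous and
killed by `e`. -/
def stringVectors (e f : Module.End K B) (W : ℕ → ℕ → Submodule K B) (p q : ℕ) : Set B :=
  {u | ∃ i d v, d + i = q ∧ v ∈ W (p + i) d ∧ e v = 0 ∧ divPow K f i v = u}

/-- The degree-preserving operator `∑ c t • f ^ t / t! * e ^ t / t!`, over `1 ≤ t ≤ q`. -/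
def stringOp (e f : Module.End K B) (c : ℕ → K) (q : ℕ) : Module.End K B :=
  ∑ t ∈ Finset.Icc 1 q, c t • (divPow K f t * divPow K e t)

/-- The eigenvalue of `stringOp e f c q` on `f ^ j / j! • v` of bidegree `(p, q)` when `e v = 0`,
as a function of `m = p - q`. -/
def stringEigenvalue (c : ℕ → K) (m j : ℕ) : K :=
  ∑ t ∈ Finset.Icc 1 j, c t * ((j.choose t : K) * ((m + j + t).choose t : K))

namespace IsBigradedSl2

variable {h e f : Module.End K B} {W : ℕ → ℕ → Submodule K B} {p q : ℕ}

lemma divPow_e_mem (hW : IsBigradedSl2 h e f W) (t : ℕ) {w : B} (hw : w ∈ W p (q + t)) :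
    divPow K e t w ∈ W (p + t) q := by
  induction t generalizing q with
  | zero => simpa [divPow_zero] using hw
  | succ t ih =>
    rw [divPow_succ, LinearMap.smul_apply, Module.End.mul_apply]
    exact Submodule.smul_mem _ _ (hW.e_mem (ih (q := q + 1) (by rwa [add_right_comm])))

lemma divPow_f_mem (hW : IsBigradedSl2 h e f W) (t : ℕ) {w : B} (hw : w ∈ W (p + t) q) :
    divPow K f t w ∈ W p (q + t) := by
  induction t generalizing p with
  | zero => simpa [divPow_zero] using hw
  | succ t ih =>
    rw [divPow_succ, LinearMap.smul_apply, Module.End.mul_apply]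
    exact Submodule.smul_mem _ _ (hW.f_mem (ih (p := p + 1) (by rwa [add_right_comm])))

lemma stringVectors_subset (hW : IsBigradedSl2 h e f W) (p q : ℕ) :
    stringVectors e f W p q ⊆ W p q := by
  rintro _ ⟨i, d, v, rfl, hv, -, rfl⟩
  exact hW.divPow_f_mem i hv

lemma h_apply_of_le (hW : IsBigradedSl2 h e f W) {j d : ℕ} (hqp : q ≤ p) (hd : d + j = q) {v : B}
    (hv : v ∈ W (p + j) d) : h v = ((p - q + j + j : ℕ) : K) • v := by
  obtain ⟨c, rfl⟩ := Nat.exists_eq_add_of_le hqp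
  rw [hW.h_apply hv, Nat.add_sub_cancel_left, ← hd]
  push_cast
  congr 1
  ring

lemma divPow_succ_f_mem_map_f (hW : IsBigradedSl2 h e f W) {i d : ℕ} (hd : d + i = q) {v : B}
    (hv : v ∈ W (p + (i + 1)) d) : divPow K f (i + 1) v ∈ (W (p + 1) q).map f := by
  subst hd
  rw [divPow_succ, LinearMap.smul_apply, Module.End.mul_apply]
  refine Submodule.smul_mem _ _ (Submodule.mem_map_of_mem (hW.divPow_f_mem i ?_))
  rwa [add_assoc, add_comm 1 i]

lemma map_stringOp_le_map_f (hW : IsBigradedSl2 h e f W) (c : ℕ → K) :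
    (W p (q + 1)).map (stringOp e f c (q + 1)) ≤ (W (p + 1) q).map f := by
  rintro _ ⟨z, hz, rfl⟩
  rw [stringOp, LinearMap.sum_apply]
  refine Submodule.sum_mem _ fun t ht => ?_
  obtain ⟨s, rfl⟩ := Nat.exists_eq_add_of_le' (Finset.mem_Icc.1 ht).1
  obtain ⟨d, rfl⟩ := Nat.exists_eq_add_of_le' (Nat.le_of_succ_le_succ (Finset.mem_Icc.1 ht).2)
  have hez : divPow K e (s + 1) z ∈ W (p + 1 + s) d := by
    rw [add_assoc, add_comm 1 s]
    exact hW.divPow_e_mem (s + 1) hz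
  rw [LinearMap.smul_apply, Module.End.mul_apply, divPow_succ K f, LinearMap.smul_apply,
    Module.End.mul_apply]
  exact Submodule.smul_mem _ _ (Submodule.smul_mem _ _
    (Submodule.mem_map_of_mem (hW.divPow_f_mem s hez)))

variable [CharZero K]

/-- Since `e (f ^ (i + 1) / (i + 1)! • v)` is a nonzero multiple of `f ^ i / i! • v`, every string
through bidegree `(p + 1, q)` continues to bidegree `(p, q + 1)`. -/
lemma span_stringVectors_le_map_e (hW : IsBigradedSl2 h e f W) (hqp : q + 1 ≤ p) :
    Submodule.span K (stringVectors e f W (p + 1) q) ≤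
      (Submodule.span K (stringVectors e f W p (q + 1))).map e := by
  rw [Submodule.span_le]
  rintro _ ⟨i, d, v, rfl, hv, hev, rfl⟩
  have hv' : v ∈ W (p + (i + 1)) d := by rwa [← add_assoc, add_right_comm]
  have hmem : divPow K f (i + 1) v ∈ stringVectors e f W p (d + i + 1) :=
    ⟨i + 1, d, v, rfl, hv', hev, rfl⟩
  have hscalar : ((p + (i + 1) : ℕ) : K) - d - i ≠ 0 := by
    obtain ⟨c, rfl⟩ := Nat.exists_eq_add_of_le hqp
    convert Nat.cast_ne_zero (R := K).2 (show i + c + 2 ≠ 0 by lia) using 1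
    push_cast
    ring
  refine ⟨_, Submodule.smul_mem _ (((p + (i + 1) : ℕ) : K) - d - i)⁻¹
    (Submodule.subset_span hmem), ?_⟩
  rw [map_smul, apply_divPow_succ_of_isSl2Triple hW.isSl2Triple (hW.h_apply hv') hev,
    inv_smul_smul₀ hscalar]

lemma span_stringVectors (hW : IsBigradedSl2 h e f W) (hqp : q ≤ p) :
    Submodule.span K (stringVectors e f W p q) = W p q := by
  refine le_antisymm (Submodule.span_le.2 (hW.stringVectors_subset p q)) ?_
  have hprim {p q : ℕ} {w : B} (hw : w ∈ W p q) (hew : e w = 0) :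
      w ∈ Submodule.span K (stringVectors e f W p q) :=
    Submodule.subset_span ⟨0, q, w, rfl, hw, hew, by simp [divPow_zero]⟩
  induction q generalizing p with
  | zero => exact fun w hw => hprim hw (hW.e_apply_eq_zero hw)
  | succ q ih =>
    intro w hw
    obtain ⟨z, hz, hzw⟩ := hW.span_stringVectors_le_map_e hqp (ih (by lia) (hW.e_mem hw))
    have hzW : z ∈ W p (q + 1) := Submodule.span_le.2 (hW.stringVectors_subset p (q + 1)) hz
    rw [← sub_add_cancel w z]
    exact add_mem (hprim (sub_mem hw hzW) (by rw [map_sub, hzw, sub_self])) hz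

lemma stringOp_apply_divPow (hW : IsBigradedSl2 h e f W) (c : ℕ → K) {j d : ℕ} (hqp : q ≤ p)
    (hd : d + j = q) {v : B} (hv : v ∈ W (p + j) d) (hev : e v = 0) :
    stringOp e f c q (divPow K f j v) = stringEigenvalue c (p - q) j • divPow K f j v := by
  have hterm (t : ℕ) := divPow_apply_divPow_apply_divPow_of_isSl2Triple hW.isSl2Triple
    (hW.h_apply_of_le hqp hd hv) hev (Nat.le_add_left j (p - q + j)) t
  rw [stringOp, stringEigenvalue, Finset.sum_smul, LinearMap.sum_apply]
  symm
  refine (Finset.sum_subset (Finset.Icc_subset_Icc_right (by lia)) fun t ht htj => ?_).trans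
    (Finset.sum_congr rfl fun t _ => ?_)
  · have hjt : j < t := not_le.1 fun hle => htj (Finset.mem_Icc.2 ⟨(Finset.mem_Icc.1 ht).1, hle⟩)
    rw [Nat.choose_eq_zero_of_lt hjt, Nat.cast_zero, zero_mul, mul_zero, zero_smul]
  · rw [LinearMap.smul_apply, Module.End.mul_apply, hterm, smul_smul, Nat.add_sub_cancel]

lemma map_stringOp_le_iSup_eigenspace (hW : IsBigradedSl2 h e f W) (c : ℕ → K) (hqp : q ≤ p) :
    (W p q).map (stringOp e f c q) ≤ ⨆ (μ : K) (_ : μ ≠ 0), (stringOp e f c q).eigenspace μ := by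
  rw [← hW.span_stringVectors hqp, Submodule.map_span_le]
  rintro _ ⟨j, d, v, hd, hv, hev, rfl⟩
  have heigen := hW.stringOp_apply_divPow c hqp hd hv hev
  rw [heigen]
  rcases eq_or_ne (stringEigenvalue c (p - q) j) 0 with hzero | hne
  · rw [hzero, zero_smul]
    exact zero_mem _
  · exact Submodule.smul_mem _ _ (Submodule.mem_iSup_of_mem _ (Submodule.mem_iSup_of_mem hne
      (Module.End.mem_eigenspace_iff.2 heigen)))

lemma disjoint_map_stringOp_ker (hW : IsBigradedSl2 h e f W) (c : ℕ → K) (hqp : q ≤ p) :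
    Disjoint ((W p q).map (stringOp e f c q)) (LinearMap.ker (stringOp e f c q)) := by
  rw [← Module.End.eigenspace_zero]
  exact ((stringOp e f c q).eigenspaces_iSupIndep 0).symm.mono_left
    (hW.map_stringOp_le_iSup_eigenspace c hqp)

lemma divPow_f_apply_ne_zero (hW : IsBigradedSl2 h e f W) {j d : ℕ} (hqp : q ≤ p)
    (hd : d + j = q) {v : B} (hv : v ∈ W (p + j) d) (hev : e v = 0) (hv0 : v ≠ 0) :
    divPow K f j v ≠ 0 := by
  have hef : divPow K e j (divPow K f j v) = ((p - q + j + j).choose j : K) • v := by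
    simpa [divPow_zero] using divPow_apply_divPow_of_isSl2Triple hW.isSl2Triple
      (hW.h_apply_of_le hqp hd hv) hev j 0 (by lia)
  have hchoose : ((p - q + j + j).choose j : K) ≠ 0 := by
    exact_mod_cast (Nat.choose_pos (by lia)).ne'
  intro hzero
  rw [hzero, map_zero] at hef
  exact smul_ne_zero hchoose hv0 hef.symm

lemma stringEigenvalue_ne_zero (hW : IsBigradedSl2 h e f W) {c : ℕ → K} (hqp : q + 1 ≤ p)
    (hle : (W (p + 1) q).map f ≤ (W p (q + 1)).map (stringOp e f c (q + 1))) {i d : ℕ}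
    (hd : d + i = q) {v : B} (hv : v ∈ W (p + (i + 1)) d) (hev : e v = 0) (hv0 : v ≠ 0) :
    stringEigenvalue c (p - (q + 1)) (i + 1) ≠ 0 := by
  intro hzero
  have hd' : d + (i + 1) = q + 1 := by rw [← hd, add_assoc]
  have hker : divPow K f (i + 1) v ∈ LinearMap.ker (stringOp e f c (q + 1)) := by
    rw [LinearMap.mem_ker, hW.stringOp_apply_divPow c hqp hd' hv hev, hzero, zero_smul]
  exact hW.divPow_f_apply_ne_zero hqp hd' hv hev hv0 (Submodule.disjoint_def.1
    (hW.disjoint_map_stringOp_ker c hqp) _ (hle (hW.divPow_succ_f_mem_map_f hd hv)) hker)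

lemma map_f_le_map_stringOp (hW : IsBigradedSl2 h e f W) {c : ℕ → K} (hqp : q + 1 ≤ p)
    (hne : ∀ i d, d + i = q → (∃ v ∈ W (p + (i + 1)) d, e v = 0 ∧ v ≠ 0) →
      stringEigenvalue c (p - (q + 1)) (i + 1) ≠ 0) :
    (W (p + 1) q).map f ≤ (W p (q + 1)).map (stringOp e f c (q + 1)) := by
  rw [← hW.span_stringVectors (show q ≤ p + 1 by lia), Submodule.map_span_le]
  rintro _ ⟨i, d, v, hd, hv, hev, rfl⟩
  rcases eq_or_ne v 0 with rfl | hv0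
  · simp only [map_zero, zero_mem]
  rw [add_assoc, add_comm 1 i] at hv
  have hd' : d + (i + 1) = q + 1 := by rw [← hd, add_assoc]
  have hmem := hW.stringVectors_subset p (q + 1) ⟨i + 1, d, v, hd', hv, hev, rfl⟩
  have hscalar := hne i d hd ⟨v, hv, hev, hv0⟩
  rw [← Module.End.mul_apply, mul_divPow, LinearMap.smul_apply]
  refine Submodule.smul_mem _ _ ?_
  rw [← inv_smul_smul₀ hscalar (divPow K f (i + 1) v),
    ← hW.stringOp_apply_divPow c hqp hd' hv hev]
  exact Submodule.smul_mem _ _ (Submodule.mem_map_of_mem hmem)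

/-- `f` sends each string vector of `W (p + 1) q` to a multiple of the next one of its string, on
which `stringOp` is scalar: the images agree iff `stringOp` kills none of the latter. -/
theorem map_stringOp_eq_map_f_iff (hW : IsBigradedSl2 h e f W) (c : ℕ → K) (hqp : q + 1 ≤ p) :
    (W p (q + 1)).map (stringOp e f c (q + 1)) = (W (p + 1) q).map f ↔
      ∀ i d, d + i = q → (∃ v ∈ W (p + (i + 1)) d, e v = 0 ∧ v ≠ 0) →
        stringEigenvalue c (p - (q + 1)) (i + 1) ≠ 0 :=
  ⟨fun heq _ _ hd ⟨_, hv, hev, hv0⟩ => hW.stringEigenvalue_ne_zero hqp heq.ge hd hv hev hv0,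
    fun hne => le_antisymm (hW.map_stringOp_le_map_f c) (hW.map_f_le_map_stringOp hqp hne)⟩

end IsBigradedSl2

end BigradedSl2

section BinomialInversion

open Finset

variable {R : Type*} [CommRing R] {B : Type*} [AddCommGroup B] [Module R B]

lemma sum_antidiagonal_neg_one_pow_mul_choose (m : ℕ) :
    ∑ p ∈ antidiagonal m, (-1 : R) ^ p.1 * (m.choose p.1 : R) = if m = 0 then 1 else 0 := by
  rw [Nat.sum_antidiagonal_eq_sum_range_succ (fun i _ => (-1 : R) ^ i * (m.choose i : R)) m]
  exact_mod_cast congrArg (Int.cast : ℤ → R) (Int.alternating_sum_range_choose (n := m))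

lemma sum_antidiagonal_sum_antidiagonal_comm (g : ℕ → ℕ → ℕ → B) (k : ℕ) :
    ∑ p ∈ antidiagonal k, ∑ r ∈ antidiagonal p.1, g r.1 r.2 p.2 =
      ∑ p ∈ antidiagonal k, ∑ r ∈ antidiagonal p.2, g p.1 r.1 r.2 := by
  rw [sum_sigma', sum_sigma']
  refine sum_nbij' (fun s => ⟨(s.2.1, s.2.2 + s.1.2), (s.2.2, s.1.2)⟩)
    (fun s => ⟨(s.1.1 + s.2.1, s.2.2), (s.1.1, s.2.1)⟩) ?_ ?_ ?_ ?_ ?_ <;>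
  · simp only [mem_sigma, HasAntidiagonal.mem_antidiagonal, Sigma.forall, Prod.forall]
    rintro a b c d ⟨rfl, rfl⟩
    simp only [add_assoc, and_self]

theorem sum_antidiagonal_choose_smul_inversion {b k : ℕ} {x y : ℕ → B}
    (hy : ∀ t ≤ k, y t = ∑ r ∈ antidiagonal t, ((b - r.1).choose r.2 : R) • x r.1) :
    ∑ p ∈ antidiagonal k, ((-1 : R) ^ p.1 * ((b - p.1).choose p.2 : R)) • y p.1 =
      (-1 : R) ^ k • x k := by
  have hchoose (i d c : ℕ) : (b - (i + d)).choose c * (b - i).choose d =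
      (b - i).choose (d + c) * (d + c).choose d := by
    rw [Nat.choose_mul (Nat.le_add_right d c), Nat.sub_sub, Nat.add_sub_cancel_left, mul_comm]
  calc ∑ p ∈ antidiagonal k, ((-1 : R) ^ p.1 * ((b - p.1).choose p.2 : R)) • y p.1
    _ = ∑ p ∈ antidiagonal k, ∑ r ∈ antidiagonal p.1,
          ((-1 : R) ^ (r.1 + r.2) * (((b - (r.1 + r.2)).choose p.2 * (b - r.1).choose r.2 : ℕ) : R))
            • x r.1 := by
        refine sum_congr rfl fun p hp => ?_
        rw [hy _ (HasAntidiagonal.antidiagonal.fst_le hp), smul_sum]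
        refine sum_congr rfl fun r hr => ?_
        rw [smul_smul, HasAntidiagonal.mem_antidiagonal.1 hr, Nat.cast_mul, mul_assoc]
    _ = ∑ p ∈ antidiagonal k, ((-1 : R) ^ p.1 * ((b - p.1).choose p.2 : R) *
          ∑ r ∈ antidiagonal p.2, (-1 : R) ^ r.1 * (p.2.choose r.1 : R)) • x p.1 := by
        rw [sum_antidiagonal_sum_antidiagonal_comm (fun i d c => ((-1 : R) ^ (i + d) *
          (((b - (i + d)).choose c * (b - i).choose d : ℕ) : R)) • x i)]
        refine sum_congr rfl fun p _ => ?_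
        rw [mul_sum, sum_smul]
        refine sum_congr rfl fun r hr => ?_
        rw [hchoose, HasAntidiagonal.mem_antidiagonal.1 hr, pow_add, Nat.cast_mul, mul_mul_mul_comm]
    _ = (-1 : R) ^ k • x k := by
        rw [sum_eq_single (k, 0)]
        · simp
        · rintro ⟨i, m⟩ hp hne
          have hm : m ≠ 0 := by
            rintro rfl
            exact hne (by rw [← HasAntidiagonal.mem_antidiagonal.1 hp, add_zero])
          simp only [sum_antidiagonal_neg_one_pow_mul_choose, if_neg hm, mul_zero, zero_smul]
        · simp

end BinomialInversion

section HasseDerivation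

open Polynomial ExteriorAlgebra

attribute [local instance] LieRing.ofAssociativeRing

variable {R : Type*} [CommRing R] {M : Type*} [AddCommGroup M] [Module R M]

/-- The algebra homomorphism `Λ M → (Λ M)[X]` extending `m ↦ m + f m X`. -/
def hasseHom (f : Module.End R M) : ExteriorAlgebra R M →ₐ[R] (ExteriorAlgebra R M)[X] :=
  ExteriorAlgebra.lift R
    ⟨((monomial 0).restrictScalars R) ∘ₗ ι R + ((monomial 1).restrictScalars R) ∘ₗ ι R ∘ₗ f,
      fun m => by
        simp only [LinearMap.add_apply, LinearMap.comp_apply, LinearMap.coe_restrictScalars,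
          add_mul, mul_add, monomial_mul_monomial, ι_sq_zero, map_zero, zero_add, add_zero]
        rw [← map_add, ι_add_mul_swap, map_zero]⟩

lemma hasseHom_ι (f : Module.End R M) (m : M) :
    hasseHom f (ι R m) = monomial 0 (ι R m) + monomial 1 (ι R (f m)) := by
  rw [hasseHom, lift_ι_apply]
  rfl

/-- The coefficient of `X ^ t` in `hasseHom f`. These operators satisfy the product rule of
divided powers of a derivation, and do equal `extDer f ^ t / t!` when `f ^ 2 = 0`. -/
def hasseDer (f : Module.End R M) (t : ℕ) : Module.End R (ExteriorAlgebra R M) :=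
  ((lcoeff _ t).restrictScalars R) ∘ₗ (hasseHom f).toLinearMap

lemma hasseDer_apply (f : Module.End R M) (t : ℕ) (x : ExteriorAlgebra R M) :
    hasseDer f t x = (hasseHom f x).coeff t := rfl

lemma hasseDer_mul (f : Module.End R M) (t : ℕ) (x y : ExteriorAlgebra R M) :
    hasseDer f t (x * y) =
      ∑ p ∈ Finset.HasAntidiagonal.antidiagonal t, hasseDer f p.1 x * hasseDer f p.2 y := by
  simp only [hasseDer_apply, map_mul, coeff_mul]

lemma hasseDer_algebraMap (f : Module.End R M) (t : ℕ) (r : R) :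
    hasseDer f t (algebraMap R _ r) = if t = 0 then algebraMap R _ r else 0 := by
  rw [hasseDer_apply, AlgHom.commutes, Polynomial.algebraMap_apply, coeff_C]

lemma hasseDer_ι (f : Module.End R M) (t : ℕ) (m : M) :
    hasseDer f t (ι R m) = (if 0 = t then ι R m else 0) + (if 1 = t then ι R (f m) else 0) := by
  rw [hasseDer_apply, hasseHom_ι, coeff_add, coeff_monomial, coeff_monomial]

lemma hasseDer_zero (f : Module.End R M) : hasseDer f 0 = 1 := by
  refine LinearMap.ext fun x => ?_
  rw [Module.End.one_apply]
  induction x using ExteriorAlgebra.induction with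
  | algebraMap r => simp [hasseDer_algebraMap]
  | ι m => simp [hasseDer_ι]
  | mul x y hx hy => simp [hasseDer_mul, hx, hy]
  | add x y hx hy => rw [map_add, hx, hy]

lemma hasseDer_one_mul (f : Module.End R M) (x y : ExteriorAlgebra R M) :
    hasseDer f 1 (x * y) = hasseDer f 1 x * y + x * hasseDer f 1 y := by
  simp [hasseDer_mul, Finset.Nat.antidiagonal_succ, hasseDer_zero, add_comm]

lemma derivation_exteriorAlgebra_ext {D D' : Module.End R (ExteriorAlgebra R M)}
    (hD : ∀ x y, D (x * y) = D x * y + x * D y) (hD' : ∀ x y, D' (x * y) = D' x * y + x * D' y)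
    (hι : ∀ m, D (ι R m) = D' (ι R m)) : D = D' := by
  have map_one {D : Module.End R (ExteriorAlgebra R M)}
      (hD : ∀ x y, D (x * y) = D x * y + x * D y) : D 1 = 0 := by
    simpa using hD 1 1
  refine LinearMap.ext fun x => ?_
  induction x using ExteriorAlgebra.induction with
  | algebraMap r => rw [Algebra.algebraMap_eq_smul_one, map_smul, map_smul, map_one hD, map_one hD']
  | ι m => exact hι m
  | mul x y hx hy => rw [hD, hD', hx, hy]
  | add x y hx hy => rw [map_add, map_add, hx, hy]

/-- The derivation of `Λ M` extending an endomorphism of `M`. -/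
def extDer : Module.End R M →ₗ⁅R⁆ Module.End R (ExteriorAlgebra R M) where
  toFun f := hasseDer f 1
  map_add' f g := derivation_exteriorAlgebra_ext (hasseDer_one_mul _)
    (fun x y => by
      simp only [LinearMap.add_apply, hasseDer_one_mul, add_mul, mul_add, add_add_add_comm])
    fun m => by simp [hasseDer_ι]
  map_smul' c f := derivation_exteriorAlgebra_ext (hasseDer_one_mul _)
    (fun x y => by simp [hasseDer_one_mul])
    fun m => by simp [hasseDer_ι]
  map_lie' {f g} := derivation_exteriorAlgebra_ext (hasseDer_one_mul _)
    (fun x y => by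
      simp only [Ring.lie_def, LinearMap.sub_apply, Module.End.mul_apply, hasseDer_one_mul,
        map_add, sub_mul, mul_sub]
      abel)
    fun m => by simp [hasseDer_ι, Ring.lie_def]

lemma hasseDer_one (f : Module.End R M) : hasseDer f 1 = extDer f := rfl

lemma extDer_mul (f : Module.End R M) (x y : ExteriorAlgebra R M) :
    extDer f (x * y) = extDer f x * y + x * extDer f y := hasseDer_one_mul f x y

lemma extDer_ι (f : Module.End R M) (m : M) : extDer f (ι R m) = ι R (f m) := by
  simp [← hasseDer_one, hasseDer_ι]

lemma extDer_algebraMap (f : Module.End R M) (r : R) : extDer f (algebraMap R _ r) = 0 := by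
  simp [← hasseDer_one, hasseDer_algebraMap]

lemma isSl2Triple_extDer {h e f : Module.End R M} (hsl : IsSl2Triple h e f) :
    IsSl2Triple (extDer h) (extDer e) (extDer f) where
  h_ne_zero hzero := hsl.h_ne_zero <| LinearMap.ext fun m =>
    (ι_inj R _ _).1 (by
      rw [← extDer_ι, hzero, LinearMap.zero_apply, LinearMap.zero_apply, map_zero])
  lie_e_f := by rw [← LieHom.map_lie, hsl.lie_e_f]
  lie_h_e_nsmul := by rw [← LieHom.map_lie, hsl.lie_h_e_nsmul, map_nsmul]
  lie_h_f_nsmul := by rw [← LieHom.map_lie, hsl.lie_h_f_nsmul, map_neg, map_nsmul]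

lemma hasseHom_map {N : Type*} [AddCommGroup N] [Module R N] {f : Module.End R M}
    {g : Module.End R N} {l : M →ₗ[R] N} (hl : g ∘ₗ l = l ∘ₗ f) (x : ExteriorAlgebra R M) :
    hasseHom g (map l x) = Polynomial.mapAlgHom (map l) (hasseHom f x) := by
  refine DFunLike.congr_fun (f := (hasseHom g).comp (map l))
    (g := (Polynomial.mapAlgHom (map l)).comp (hasseHom f)) (ExteriorAlgebra.hom_ext ?_) x
  ext1 m
  have hm : g (l m) = l (f m) := LinearMap.congr_fun hl m
  simp [hasseHom_ι, hm, Polynomial.map_monomial]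

lemma hasseDer_map {N : Type*} [AddCommGroup N] [Module R N] {f : Module.End R M}
    {g : Module.End R N} {l : M →ₗ[R] N} (hl : g ∘ₗ l = l ∘ₗ f) (t : ℕ)
    (x : ExteriorAlgebra R M) : hasseDer g t (map l x) = map l (hasseDer f t x) := by
  rw [hasseDer_apply, hasseHom_map hl, hasseDer_apply, Polynomial.coe_mapAlgHom, coeff_map]
  rfl

lemma hasseHom_map_of_comp_eq_zero {N : Type*} [AddCommGroup N] [Module R N]
    {f : Module.End R M} {l : N →ₗ[R] M} (hl : f ∘ₗ l = 0) (x : ExteriorAlgebra R N) :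
    hasseHom f (map l x) = C (map l x) := by
  refine DFunLike.congr_fun (f := (hasseHom f).comp (map l))
    (g := (CAlgHom (R := R)).comp (map l)) (ExteriorAlgebra.hom_ext ?_) x
  ext1 m
  have hm : f (l m) = 0 := LinearMap.congr_fun hl m
  simp [hasseHom_ι, hm]

lemma hasseDer_map_mul_of_comp_eq_zero {N : Type*} [AddCommGroup N] [Module R N]
    {f : Module.End R M} {l : N →ₗ[R] M} (hl : f ∘ₗ l = 0) (t : ℕ) (x : ExteriorAlgebra R N)
    (y : ExteriorAlgebra R M) : hasseDer f t (map l x * y) = map l x * hasseDer f t y := by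
  rw [hasseDer_apply, map_mul, hasseHom_map_of_comp_eq_zero hl, coeff_C_mul, hasseDer_apply]

lemma extDer_map_of_comp_eq_zero {N : Type*} [AddCommGroup N] [Module R N]
    {f : Module.End R M} {l : N →ₗ[R] M} (hl : f ∘ₗ l = 0) (x : ExteriorAlgebra R N) :
    extDer f (map l x) = 0 := by
  rw [← hasseDer_one, hasseDer_apply, hasseHom_map_of_comp_eq_zero hl, coeff_C_succ]

lemma extDer_hasseDer {f : Module.End R M} (hf : f ∘ₗ f = 0) (t : ℕ) (x : ExteriorAlgebra R M) :
    extDer f (hasseDer f t x) = ((t : R) + 1) • hasseDer f (t + 1) x := by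
  induction x using ExteriorAlgebra.induction generalizing t with
  | algebraMap r =>
    rw [hasseDer_algebraMap, hasseDer_algebraMap]
    split_ifs <;> simp_all [extDer_algebraMap]
  | ι m =>
    have hm : f (f m) = 0 := LinearMap.congr_fun hf m
    rw [hasseDer_ι, hasseDer_ι]
    rcases t with _ | _ | t <;> simp [extDer_ι, hm]
  | mul x y hx hy =>
    have hsplit : ∀ p ∈ Finset.HasAntidiagonal.antidiagonal (t + 1),
        ((t : R) + 1) • (hasseDer f p.1 x * hasseDer f p.2 y) =
        (p.1 : R) • (hasseDer f p.1 x * hasseDer f p.2 y) +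
          (p.2 : R) • (hasseDer f p.1 x * hasseDer f p.2 y) := fun p hp => by
      rw [← add_smul, ← Nat.cast_add, Finset.HasAntidiagonal.mem_antidiagonal.1 hp, Nat.cast_succ]
    rw [hasseDer_mul, hasseDer_mul, map_sum, Finset.smul_sum, Finset.sum_congr rfl hsplit,
      Finset.sum_add_distrib, Finset.Nat.sum_antidiagonal_succ, Finset.Nat.sum_antidiagonal_succ']
    simp [extDer_mul, hx, hy, Finset.sum_add_distrib]
  | add x y hx hy => simp only [map_add, hx, hy, smul_add]

lemma hasseDer_eq_divPow {K : Type*} [Field K] [CharZero K] [Module K M] {f : Module.End K M}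
    (hf : f ∘ₗ f = 0) (t : ℕ) : hasseDer f t = divPow K (extDer f) t := by
  induction t with
  | zero => rw [hasseDer_zero, divPow_zero]
  | succ t ih =>
    refine LinearMap.ext fun x => ?_
    rw [divPow_succ, LinearMap.smul_apply, Module.End.mul_apply, ← ih, extDer_hasseDer hf,
      inv_smul_smul₀ (by exact_mod_cast t.succ_ne_zero)]

end HasseDerivation

section HasseDerivationWedge

open ExteriorAlgebra

variable {R : Type*} [CommRing R] {M : Type*} [AddCommGroup M] [Module R M]

lemma list_prod_ofFn_monomial {A : Type*} [Semiring A] {m : ℕ} (d : Fin m → ℕ) (b : Fin m → A) :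
    (List.ofFn fun i => Polynomial.monomial (d i) (b i)).prod =
      Polynomial.monomial (∑ i, d i) (List.ofFn b).prod := by
  induction m with
  | zero => simp
  | succ m ih =>
    simp [List.ofFn_succ, Fin.sum_univ_succ, ih, Polynomial.monomial_mul_monomial]

lemma list_prod_ofFn_piecewise_monomial {m : ℕ} (s : Finset (Fin m)) (v w : Fin m → M) :
    (List.ofFn (s.piecewise (fun i => Polynomial.monomial 0 (ι R (v i)))
      fun i => Polynomial.monomial 1 (ι R (w i)))).prod =
      Polynomial.monomial sᶜ.card (ιMulti R m (s.piecewise v w)) := by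
  have hpiecewise : s.piecewise (fun i => Polynomial.monomial 0 (ι R (v i)))
      (fun i => Polynomial.monomial 1 (ι R (w i))) =
      fun i => Polynomial.monomial (if i ∈ s then 0 else 1) (ι R (s.piecewise v w i)) := by
    ext1 i
    by_cases hi : i ∈ s <;> simp [hi]
  rw [hpiecewise, list_prod_ofFn_monomial, ιMulti_apply]
  congr 1
  simp [Finset.sum_ite, Finset.filter_not, ← Finset.compl_eq_univ_sdiff]

lemma hasseHom_ιMulti (f : Module.End R M) {m : ℕ} (v : Fin m → M) :
    hasseHom f (ιMulti R m v) = ∑ s : Finset (Fin m),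
      Polynomial.monomial sᶜ.card (ιMulti R m (s.piecewise v (f ∘ v))) := by
  have hexpand :=
    (MultilinearMap.mkPiAlgebraFin R m (Polynomial (ExteriorAlgebra R M))).map_add_univ
      (fun i => Polynomial.monomial 0 (ι R (v i))) fun i => Polynomial.monomial 1 (ι R (f (v i)))
  simp only [MultilinearMap.mkPiAlgebraFin_apply, list_prod_ofFn_piecewise_monomial] at hexpand
  rw [ιMulti_apply, map_list_prod, List.map_ofFn, Function.comp_def]
  simp only [hasseHom_ι]
  exact hexpand

lemma hasseDer_ιMulti (f : Module.End R M) (t : ℕ) {m : ℕ} (v : Fin m → M) :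
    hasseDer f t (ιMulti R m v) =
      ∑ s : Finset (Fin m) with sᶜ.card = t, ιMulti R m (s.piecewise v (f ∘ v)) := by
  rw [hasseDer_apply, hasseHom_ιMulti, Polynomial.finsetSum_coeff, Finset.sum_filter]
  simp only [Polynomial.coeff_monomial]

end HasseDerivationWedge

section DerivationOnPowers

variable {R : Type*} [CommRing R] {A : Type*} [Ring A] [Algebra R A]
  {D : Module.End R A} {I J : Submodule R A}

lemma map_mul_le_of_derivation (hD : ∀ x y, D (x * y) = D x * y + x * D y) (P Q : Submodule R A) :
    (P * Q).map D ≤ P.map D * Q ⊔ P * Q.map D := by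
  rw [Submodule.map_le_iff_le_comap, Submodule.mul_le]
  intro x hx y hy
  rw [Submodule.mem_comap, hD]
  exact Submodule.add_mem_sup (Submodule.mul_mem_mul (Submodule.mem_map_of_mem hx) hy)
    (Submodule.mul_mem_mul hx (Submodule.mem_map_of_mem hy))

lemma map_pow_succ_le_pow_mul (hD : ∀ x y, D (x * y) = D x * y + x * D y) (hIJ : I.map D ≤ J)
    (hJI : J * I ≤ I * J) (n : ℕ) : (I ^ (n + 1)).map D ≤ I ^ n * J := by
  induction n with
  | zero => simpa using hIJ
  | succ n ih =>
    rw [pow_succ]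
    refine (map_mul_le_of_derivation hD _ _).trans (sup_le ?_ (mul_le_mul_right hIJ _))
    calc (I ^ (n + 1)).map D * I ≤ I ^ n * J * I := mul_le_mul_left ih _
      _ ≤ I ^ n * (I * J) := by rw [mul_assoc]; exact mul_le_mul_right hJI _
      _ = I ^ (n + 1) * J := by rw [pow_succ, mul_assoc]

lemma map_pow_succ_le_mul_pow (hD : ∀ x y, D (x * y) = D x * y + x * D y) (hIJ : I.map D ≤ J)
    (hIJ' : I * J ≤ J * I) (n : ℕ) : (I ^ (n + 1)).map D ≤ J * I ^ n := by
  induction n with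
  | zero => simpa using hIJ
  | succ n ih =>
    rw [pow_succ']
    refine (map_mul_le_of_derivation hD _ _).trans (sup_le (mul_le_mul_left hIJ _) ?_)
    calc I * (I ^ (n + 1)).map D ≤ I * (J * I ^ n) := mul_le_mul_right ih _
      _ ≤ J * I * I ^ n := by rw [← mul_assoc]; exact mul_le_mul_left hIJ' _
      _ = J * I ^ (n + 1) := by rw [pow_succ', mul_assoc]

lemma mul_le_eigenspace_add (hD : ∀ x y, D (x * y) = D x * y + x * D y) {μ ν : R}
    (hI : I ≤ D.eigenspace μ) (hJ : J ≤ D.eigenspace ν) : I * J ≤ D.eigenspace (μ + ν) := by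
  refine Submodule.mul_le.2 fun x hx y hy => ?_
  rw [Module.End.mem_eigenspace_iff, hD, Module.End.mem_eigenspace_iff.1 (hI hx),
    Module.End.mem_eigenspace_iff.1 (hJ hy), smul_mul_assoc, mul_smul_comm, add_smul]

lemma pow_le_eigenspace_nsmul (hD : ∀ x y, D (x * y) = D x * y + x * D y) {μ : R}
    (hI : I ≤ D.eigenspace μ) (n : ℕ) : I ^ n ≤ D.eigenspace (n • μ) := by
  induction n with
  | zero =>
    have hone : D 1 = 0 := by simpa using hD 1 1
    rw [pow_zero, Submodule.one_le, Module.End.mem_eigenspace_iff, hone, zero_smul, zero_smul]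
  | succ n ih => rw [pow_succ, succ_nsmul]; exact mul_le_eigenspace_add hD ih hI

end DerivationOnPowers

section GradedCommutativity

open ExteriorAlgebra

variable {R : Type*} [CommRing R] {M : Type*} [AddCommGroup M] [Module R M]

lemma ι_mul_eq_of_mem_exteriorPower (m : M) {q : ℕ} {y : ExteriorAlgebra R M}
    (hy : y ∈ ⋀[R]^q M) : ι R m * y = (-1 : R) ^ q • (y * ι R m) := by
  induction hy using Submodule.pow_induction_on_left' with
  | algebraMap r => rw [pow_zero, one_smul, Algebra.commutes]
  | add y y' i _ _ ih ih' => rw [mul_add, ih, ih', add_mul, smul_add]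
  | mem_mul x hx i y _ ih =>
    obtain ⟨m', rfl⟩ := hx
    rw [← mul_assoc, eq_neg_of_add_eq_zero_left (ι_add_mul_swap m m'), neg_mul, mul_assoc, ih,
      mul_smul_comm, mul_assoc, pow_succ, mul_neg_one, neg_smul]

theorem mul_eq_neg_one_pow_smul_mul {p q : ℕ} {x y : ExteriorAlgebra R M} (hx : x ∈ ⋀[R]^p M)
    (hy : y ∈ ⋀[R]^q M) : x * y = (-1 : R) ^ (p * q) • (y * x) := by
  induction hx using Submodule.pow_induction_on_left' with
  | algebraMap r => rw [zero_mul, pow_zero, one_smul, Algebra.commutes]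
  | add x x' i _ _ ih ih' => rw [add_mul, ih, ih', mul_add, smul_add]
  | mem_mul x hx i x' _ ih =>
    obtain ⟨m, rfl⟩ := hx
    rw [mul_assoc, ih, mul_smul_comm, ← mul_assoc, ι_mul_eq_of_mem_exteriorPower m hy,
      smul_mul_assoc, smul_smul, mul_assoc, ← pow_add, Nat.succ_mul]

end GradedCommutativity

section ExteriorAlgebraProd

open ExteriorAlgebra

variable {R : Type*} [CommRing R] {M N : Type*} [AddCommGroup M] [Module R M]
  [AddCommGroup N] [Module R N]

variable (R M N) in
/-- The linear map `Λ M ⊗ Λ N → Λ (M × N)`, `x ⊗ y ↦ x ∧ y`. -/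
def extProdMul : ExteriorAlgebra R M ⊗[R] ExteriorAlgebra R N →ₗ[R] ExteriorAlgebra R (M × N) :=
  LinearMap.mul' R _ ∘ₗ TensorProduct.map (map (LinearMap.inl R M N)).toLinearMap
    (map (LinearMap.inr R M N)).toLinearMap

lemma extProdMul_tmul (x : ExteriorAlgebra R M) (y : ExteriorAlgebra R N) :
    extProdMul R M N (x ⊗ₜ y) = map (.inl R M N) x * map (.inr R M N) y := rfl

open CliffordAlgebra in
lemma extProdMul_injective : Function.Injective (extProdMul R M N) := by
  let Q : QuadraticForm R M := 0
  let Q' : QuadraticForm R N := 0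
  let c : CliffordAlgebra (Q.prod Q') ≃ₐ[R] ExteriorAlgebra R (M × N) :=
    equivOfIsometry ⟨LinearEquiv.refl R _, fun m => by simp [Q, Q']⟩
  have hc (m : M × N) : c (CliffordAlgebra.ι _ m) = ExteriorAlgebra.ι R m :=
    CliffordAlgebra.map_apply_ι _ _
  have hinl : ExteriorAlgebra.map (.inl R M N) =
      (c : _ →ₐ[R] _).comp (CliffordAlgebra.map (.inl Q Q')) :=
    ExteriorAlgebra.hom_ext <| LinearMap.ext fun m => (ExteriorAlgebra.map_apply_ι _ m).trans <|
      (hc _).symm.trans <| congrArg c (CliffordAlgebra.map_apply_ι (.inl Q Q') m).symm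
  have hinr : ExteriorAlgebra.map (.inr R M N) =
      (c : _ →ₐ[R] _).comp (CliffordAlgebra.map (.inr Q Q')) :=
    ExteriorAlgebra.hom_ext <| LinearMap.ext fun m => (ExteriorAlgebra.map_apply_ι _ m).trans <|
      (hc _).symm.trans <| congrArg c (CliffordAlgebra.map_apply_ι (.inr Q Q') m).symm
  have hfactor : extProdMul R M N = c.toLinearMap ∘ₗ (prodEquiv Q Q').symm.toLinearMap ∘ₗ
      (GradedTensorProduct.of R (evenOdd Q) (evenOdd Q')).toLinearMap := by
    refine TensorProduct.ext' fun x y => ?_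
    rw [extProdMul_tmul, hinl, hinr]
    exact (map_mul c (CliffordAlgebra.map (.inl Q Q') x) (CliffordAlgebra.map (.inr Q Q') y)).symm
  rw [hfactor]
  exact c.injective.comp ((prodEquiv Q Q').symm.injective.comp (LinearEquiv.injective _))

variable (R M N) in
/-- The bihomogeneous component of bidegree `(p, q)` of `Λ (M × N)`. -/
def bidegree (p q : ℕ) : Submodule R (ExteriorAlgebra R (M × N)) :=
  LinearMap.range (ι R ∘ₗ LinearMap.inl R M N) ^ p *
    LinearMap.range (ι R ∘ₗ LinearMap.inr R M N) ^ q

variable (R M N) in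
/-- The linear map `Λ^p M ⊗ Λ^q N → Λ (M × N)`, `x ⊗ y ↦ x ∧ y`. -/
def biWedge (p q : ℕ) : ⋀[R]^p M ⊗[R] ⋀[R]^q N →ₗ[R] ExteriorAlgebra R (M × N) :=
  extProdMul R M N ∘ₗ TensorProduct.mapIncl (⋀[R]^p M) (⋀[R]^q N)

lemma biWedge_tmul {p q : ℕ} (x : ⋀[R]^p M) (y : ⋀[R]^q N) :
    biWedge R M N p q (x ⊗ₜ y) = map (.inl R M N) x * map (.inr R M N) y := rfl

lemma map_exteriorPower (f : M →ₗ[R] N) (p : ℕ) :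
    (⋀[R]^p M).map (map f).toLinearMap = LinearMap.range (ι R ∘ₗ f) ^ p := by
  rw [Submodule.map_pow, ← LinearMap.range_comp, map_comp_ι]

lemma map_mem_exteriorPower (f : M →ₗ[R] N) {p : ℕ} (x : ⋀[R]^p M) : map f x ∈ ⋀[R]^p N := by
  have hx : map f x ∈ LinearMap.range (ι R ∘ₗ f) ^ p := by
    rw [← map_exteriorPower]
    exact Submodule.mem_map_of_mem x.2
  exact pow_le_pow_left' (LinearMap.range_comp_le_range f (ι R)) p hx

lemma range_biWedge (p q : ℕ) : LinearMap.range (biWedge R M N p q) = bidegree R M N p q := by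
  rw [biWedge, extProdMul, bidegree, ← map_exteriorPower, ← map_exteriorPower, LinearMap.comp_assoc,
    LinearMap.range_comp, TensorProduct.mapIncl, ← TensorProduct.map_comp, TensorProduct.range_map,
    Submodule.map_map₂, LinearMap.range_comp, LinearMap.range_comp, Submodule.range_subtype,
    Submodule.range_subtype, Submodule.mul_eq_map₂]
  rfl

lemma biWedge_injective {K : Type*} [Field K] [Module K M] [Module K N] (p q : ℕ) :
    Function.Injective (biWedge K M N p q) :=
  extProdMul_injective.comp <| TensorProduct.map_injective_of_flat_flat _ _
    (Submodule.subtype_injective _) (Submodule.subtype_injective _)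

lemma range_ι_comp_mul_range_ι_comp_le {M' : Type*} [AddCommGroup M'] [Module R M']
    (f : M →ₗ[R] M') (g : N →ₗ[R] M') :
    LinearMap.range (ι R ∘ₗ f) * LinearMap.range (ι R ∘ₗ g) ≤
      LinearMap.range (ι R ∘ₗ g) * LinearMap.range (ι R ∘ₗ f) := by
  rw [Submodule.mul_le]
  rintro _ ⟨x, rfl⟩ _ ⟨y, rfl⟩
  rw [LinearMap.comp_apply, LinearMap.comp_apply,
    eq_neg_of_add_eq_zero_left (ι_add_mul_swap (f x) (g y))]
  exact neg_mem (Submodule.mul_mem_mul ⟨y, rfl⟩ ⟨x, rfl⟩)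

lemma map_inr_mul_map_inl {p q : ℕ} (x : ⋀[R]^p M) (y : ⋀[R]^q N) :
    map (.inr R M N) y * map (.inl R M N) x =
      (-1 : R) ^ (q * p) • (map (.inl R M N) x * map (.inr R M N) y) :=
  mul_eq_neg_one_pow_smul_mul (map_mem_exteriorPower _ y) (map_mem_exteriorPower _ x)

lemma biWedge_tmul_mul_biWedge_tmul {p q p' q' : ℕ} (x : ⋀[R]^p M) (y : ⋀[R]^q N) (x' : ⋀[R]^p' M)
    (y' : ⋀[R]^q' N) :
    biWedge R M N p q (x ⊗ₜ y) * biWedge R M N p' q' (x' ⊗ₜ y') = (-1 : R) ^ (q * p') •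
      (map (.inl R M N) (x * x' : ExteriorAlgebra R M) *
        map (.inr R M N) (y * y' : ExteriorAlgebra R N)) := by
  rw [biWedge_tmul, biWedge_tmul, map_mul, map_mul, mul_assoc, mul_assoc,
    ← mul_assoc (map (.inr R M N) y.1), map_inr_mul_map_inl, smul_mul_assoc, mul_smul_comm,
    mul_assoc]

end ExteriorAlgebraProd

section Polarization

open ExteriorAlgebra

attribute [local instance] LieRing.ofAssociativeRing

section CommRing

variable (R : Type*) [CommRing R] (M : Type*) [AddCommGroup M] [Module R M]

/-- The endomorphism `(x, y) ↦ (y, 0)` of `M × M`; its extension to a derivation of `Λ (M × M)` is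
the raising polarization operator. -/
def raise : Module.End R (M × M) := .inl R M M ∘ₗ .snd R M M

/-- The endomorphism `(x, y) ↦ (0, x)` of `M × M`; its extension to a derivation of `Λ (M × M)` is
the lowering polarization operator. -/
def lower : Module.End R (M × M) := .inr R M M ∘ₗ .fst R M M

/-- The endomorphism `(x, y) ↦ (x, -y)` of `M × M`; its extension to a derivation of `Λ (M × M)`
is the weight operator `p - q` in bidegree `(p, q)`. -/
def weight : Module.End R (M × M) := LinearMap.id.prodMap (-LinearMap.id)

lemma isSl2Triple_polarization [Nontrivial M] :
    IsSl2Triple (weight R M) (raise R M) (lower R M) where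
  h_ne_zero hzero := by
    obtain ⟨m, hm⟩ := exists_ne (0 : M)
    exact hm (congrArg Prod.fst (LinearMap.congr_fun hzero (m, 0)))
  lie_e_f := by
    ext <;> simp [weight, raise, lower, LieRing.of_associative_ring_bracket]
  lie_h_e_nsmul := by
    ext <;> simp [weight, raise, two_smul, LieRing.of_associative_ring_bracket]
  lie_h_f_nsmul := by
    ext <;> simp [weight, lower, two_smul, LieRing.of_associative_ring_bracket]
    abel

variable {R M}

lemma raise_comp_inl : raise R M ∘ₗ .inl R M M = 0 := by ext <;> simp [raise]

lemma lower_comp_inr : lower R M ∘ₗ .inr R M M = 0 := by ext <;> simp [lower]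

lemma raise_comp_raise : raise R M ∘ₗ raise R M = 0 := by ext <;> simp [raise]

lemma lower_comp_lower : lower R M ∘ₗ lower R M = 0 := by ext <;> simp [lower]

lemma map_extDer_range_ι_comp (f : Module.End R M) {N : Type*} [AddCommGroup N] [Module R N]
    (g : N →ₗ[R] M) :
    (LinearMap.range (ι R ∘ₗ g)).map (extDer f) = LinearMap.range (ι R ∘ₗ f ∘ₗ g) := by
  rw [← LinearMap.range_comp]
  congr 1
  exact LinearMap.ext fun m => extDer_ι f (g m)

lemma map_extDer_eq_bot {N : Type*} [AddCommGroup N] [Module R N] {f : Module.End R M}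
    {g : N →ₗ[R] M} (hfg : f ∘ₗ g = 0) (p : ℕ) :
    (LinearMap.range (ι R ∘ₗ g) ^ p).map (extDer f) = ⊥ := by
  rw [← map_exteriorPower, eq_bot_iff, Submodule.map_le_iff_le_comap, Submodule.map_le_iff_le_comap]
  intro x _
  change extDer f (map g x) = 0
  exact extDer_map_of_comp_eq_zero hfg x

variable (R M) in
lemma map_raise_bidegree_succ_le (p q : ℕ) :
    (bidegree R M M p (q + 1)).map (extDer (raise R M)) ≤ bidegree R M M (p + 1) q := by
  refine (map_mul_le_of_derivation (extDer_mul _) _ _).trans (sup_le ?_ ?_)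
  · rw [map_extDer_eq_bot raise_comp_inl, Submodule.bot_mul]
    exact bot_le
  · rw [bidegree, pow_succ _ p, mul_assoc]
    refine mul_le_mul_right (map_pow_succ_le_mul_pow (extDer_mul _) ?_
      (range_ι_comp_mul_range_ι_comp_le _ _) q) _
    rw [map_extDer_range_ι_comp]
    rfl

variable (R M) in
lemma map_lower_bidegree_succ_le (p q : ℕ) :
    (bidegree R M M (p + 1) q).map (extDer (lower R M)) ≤ bidegree R M M p (q + 1) := by
  refine (map_mul_le_of_derivation (extDer_mul _) _ _).trans (sup_le ?_ ?_)
  · rw [bidegree, pow_succ' _ q, ← mul_assoc]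
    refine mul_le_mul_left (map_pow_succ_le_pow_mul (extDer_mul _) ?_
      (range_ι_comp_mul_range_ι_comp_le _ _) p) _
    rw [map_extDer_range_ι_comp]
    rfl
  · rw [map_extDer_eq_bot lower_comp_inr, Submodule.mul_bot]
    exact bot_le

variable (R M) in
lemma bidegree_le_eigenspace_weight (p q : ℕ) :
    bidegree R M M p q ≤ (extDer (weight R M)).eigenspace ((p : R) - q) := by
  have hinl : LinearMap.range (ι R ∘ₗ .inl R M M) ≤ (extDer (weight R M)).eigenspace 1 := by
    rintro _ ⟨m, rfl⟩
    simp [extDer_ι, weight]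
  have hinr : LinearMap.range (ι R ∘ₗ .inr R M M) ≤ (extDer (weight R M)).eigenspace (-1) := by
    rintro _ ⟨m, rfl⟩
    rw [Module.End.mem_eigenspace_iff]
    simp [extDer_ι, weight, ← map_neg]
  have hbidegree := mul_le_eigenspace_add (extDer_mul _)
    (pow_le_eigenspace_nsmul (extDer_mul _) hinl p) (pow_le_eigenspace_nsmul (extDer_mul _) hinr q)
  rwa [nsmul_one, smul_neg, nsmul_one, ← sub_eq_add_neg] at hbidegree

end CommRing

section Field

variable {K : Type*} [Field K] {M : Type*} [AddCommGroup M] [Module K M]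

theorem isBigradedSl2_bidegree [Nontrivial M] :
    IsBigradedSl2 (extDer (weight K M)) (extDer (raise K M)) (extDer (lower K M))
      (bidegree K M M) where
  isSl2Triple := isSl2Triple_extDer (isSl2Triple_polarization K M)
  h_apply hw := Module.End.mem_eigenspace_iff.1 (bidegree_le_eigenspace_weight K M _ _ hw)
  e_mem hw := map_raise_bidegree_succ_le K M _ _ (Submodule.mem_map_of_mem hw)
  f_mem hw := map_lower_bidegree_succ_le K M _ _ (Submodule.mem_map_of_mem hw)
  e_apply_eq_zero {p w} hw := by
    rw [bidegree, pow_zero, mul_one] at hw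
    exact (map_extDer_eq_bot raise_comp_inl p).le (Submodule.mem_map_of_mem hw)

end Field

end Polarization

section PolarizationOfProducts

open ExteriorAlgebra

attribute [local instance] LieRing.ofAssociativeRing

/-- The image of `x ⊗ y` under `Λ^a ⊗ Λ^b → Λ^{a-r} ⊗ Λ^r ⊗ Λ^r ⊗ Λ^{b-r} → Λ (M × M)`,
comultiplying both factors and exchanging the two copies of `Λ^r`. -/
def exchange {R : Type*} [CommRing R] {M : Type*} [AddCommGroup M] [Module R M] (r : ℕ)
    (x y : ExteriorAlgebra R M) : ExteriorAlgebra R (M × M) :=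
  hasseDer (lower R M) r (map (.inl R M M) x) * hasseDer (raise R M) r (map (.inr R M M) y)

variable {K : Type*} [Field K] [CharZero K] {M : Type*} [AddCommGroup M] [Module K M]

lemma hasseDer_lower_hasseDer_raise_map_inr [Nontrivial M] {b t r : ℕ} (hb : t + r ≤ b)
    (y : ⋀[K]^b M) :
    hasseDer (lower K M) t (hasseDer (raise K M) (t + r) (map (.inr K M M) y)) =
      ((b - r).choose t : K) • hasseDer (raise K M) r (map (.inr K M M) y) := by
  have hy : map (.inr K M M) (y : ExteriorAlgebra K M) ∈ bidegree K M M 0 b := by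
    rw [bidegree, pow_zero, one_mul, ← map_exteriorPower]
    exact Submodule.mem_map_of_mem y.2
  have hweight : (-extDer (weight K M)) (map (.inr K M M) y) = (b : K) • map (.inr K M M) y := by
    simp [isBigradedSl2_bidegree.h_apply hy]
  rw [hasseDer_eq_divPow lower_comp_lower, hasseDer_eq_divPow raise_comp_raise,
    hasseDer_eq_divPow raise_comp_raise]
  exact divPow_apply_divPow_of_isSl2Triple (isSl2Triple_extDer (isSl2Triple_polarization K M)).symm
    hweight (extDer_map_of_comp_eq_zero lower_comp_inr _) t r hb

lemma hasseDer_lower_hasseDer_raise_map_inl_mul_map_inr [Nontrivial M] {b t : ℕ} (htb : t ≤ b)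
    (x : ExteriorAlgebra K M) (y : ⋀[K]^b M) :
    hasseDer (lower K M) t (hasseDer (raise K M) t (map (.inl K M M) x * map (.inr K M M) y)) =
      ∑ r ∈ Finset.HasAntidiagonal.antidiagonal t,
        ((b - r.1).choose r.2 : K) • exchange r.1 x (y : ExteriorAlgebra K M) := by
  rw [hasseDer_map_mul_of_comp_eq_zero raise_comp_inl, hasseDer_mul]
  refine Finset.sum_congr rfl fun r hr => ?_
  obtain rfl : r.2 + r.1 = t := by rw [add_comm, Finset.HasAntidiagonal.mem_antidiagonal.1 hr]
  rw [hasseDer_lower_hasseDer_raise_map_inr htb, mul_smul_comm, exchange]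

end PolarizationOfProducts

section PrimitiveVectors

open ExteriorAlgebra

lemma extDer_raise_map_inl_ιMulti_mul_map_inr_ιMulti {R : Type*} [CommRing R] {M : Type*}
    [AddCommGroup M] [Module R M] {p q : ℕ} {u : Fin p → M} {w : Fin q → M}
    (hwu : Set.range w ⊆ Set.range u) :
    extDer (raise R M) (map (.inl R M M) (ιMulti R p u) * map (.inr R M M) (ιMulti R q w)) = 0 := by
  rw [← hasseDer_one, hasseDer_map_mul_of_comp_eq_zero raise_comp_inl, map_apply_ιMulti,
    map_apply_ιMulti, hasseDer_ιMulti, Finset.mul_sum]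
  refine Finset.sum_eq_zero fun s hs => ?_
  obtain ⟨i, hi⟩ : sᶜ.Nonempty := by
    rw [← Finset.card_pos, (Finset.mem_filter.1 hs).2]
    exact Nat.one_pos
  obtain ⟨j, hj⟩ := hwu ⟨i, rfl⟩
  rw [ιMulti_mul_ιMulti]
  refine ιMulti_eq_zero_of_not_inj fun hinj => ?_
  have hij : Fin.castAdd q j = Fin.natAdd p i := hinj <| by
    simp [Fin.append_left, Fin.append_right, Finset.mem_compl.1 hi, raise, hj]
  exact absurd (congrArg Fin.val hij) (by simp; lia)

variable {K : Type*} [Field K] {M : Type*} [AddCommGroup M] [Module K M]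

lemma ιMulti_ne_zero_of_linearIndependent {p : ℕ} {v : Fin p → M} (hv : LinearIndependent K v) :
    exteriorPower.ιMulti K p v ≠ 0 := by
  have hne := (exteriorPower.ιMulti_family_linearIndependent_field (n := p) hv).ne_zero
    (Set.powersetCard.ofFinEmbEquiv (RelEmbedding.refl (α := Fin p) (· ≤ ·)))
  rwa [exteriorPower.ιMulti_family, Equiv.symm_apply_apply] at hne

lemma biWedge_tmul_ne_zero {p q : ℕ} {x : ⋀[K]^p M} {y : ⋀[K]^q M} (hx : x ≠ 0) (hy : y ≠ 0) :
    biWedge K M M p q (x ⊗ₜ y) ≠ 0 := by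
  rw [Ne, map_eq_zero_iff _ (biWedge_injective p q)]
  exact (LinearIndependent.tmul_of_isDomain (v := fun _ : Unit => x) (w := fun _ : Unit => y)
    (linearIndependent_unique_iff.2 hx) (linearIndependent_unique_iff.2 hy)).ne_zero ((), ())

theorem exists_mem_bidegree_extDer_raise_eq_zero_iff [Module.Finite K M] {p q : ℕ} (hqp : q ≤ p) :
    (∃ v ∈ bidegree K M M p q, extDer (raise K M) v = 0 ∧ v ≠ 0) ↔ p ≤ Module.finrank K M := by
  constructor
  · rintro ⟨v, hv, -, hv0⟩
    by_contra! hp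
    have : Subsingleton (⋀[K]^p M) := Module.finrank_zero_iff.1 <| by
      rw [exteriorPower.finrank_eq, Nat.choose_eq_zero_of_lt hp]
    obtain ⟨z, rfl⟩ := (range_biWedge p q).ge hv
    exact hv0 (by rw [Subsingleton.elim z 0, map_zero])
  · intro hp
    have hu (m : ℕ) (hm : m ≤ Module.finrank K M) :=
      ιMulti_ne_zero_of_linearIndependent
        ((Module.finBasis K M).linearIndependent.comp _ (Fin.castLE_injective hm))
    exact ⟨_, (range_biWedge p q).le ⟨_, rfl⟩,
      extDer_raise_map_inl_ιMulti_mul_map_inr_ιMulti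
        (by rintro _ ⟨i, rfl⟩; exact ⟨Fin.castLE hqp i, rfl⟩),
      biWedge_tmul_ne_zero (hu p hp) (hu q (hqp.trans hp))⟩

end PrimitiveVectors

section ExchangeAsStringOp

open ExteriorAlgebra

/-- The coefficient of `f ^ t / t! * e ^ t / t!` in the expression of `ψ_k` through the polarization
operators. -/
def psiCoeff (K : Type*) [Field K] (b k t : ℕ) : K :=
  (-1) ^ (t - 1) * ((b - t).choose (b - k) : K)

variable {K : Type*} [Field K] {B : Type*} [AddCommGroup B] [Module K B]

lemma sum_Icc_psiCoeff_smul {b k : ℕ} (hkb : k ≤ b) (z : ℕ → B) :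
    ∑ t ∈ Finset.Icc 1 b, psiCoeff K b k t • z t = (b.choose k : K) • z 0 -
      ∑ p ∈ Finset.HasAntidiagonal.antidiagonal k,
        ((-1 : K) ^ p.1 * ((b - p.1).choose p.2 : K)) • z p.1 := by
  have hIcc : ∑ t ∈ Finset.Icc 1 b, psiCoeff K b k t • z t =
      ∑ t ∈ Finset.Icc 1 k, psiCoeff K b k t • z t := by
    refine (Finset.sum_subset (Finset.Icc_subset_Icc_right hkb) fun t ht htk => ?_).symm
    rw [Finset.mem_Icc] at ht htk
    rw [psiCoeff, Nat.choose_eq_zero_of_lt (by lia), Nat.cast_zero, mul_zero, zero_smul]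
  rw [hIcc, Finset.Nat.sum_antidiagonal_eq_sum_range_succ
    (fun t s => ((-1 : K) ^ t * ((b - t).choose s : K)) • z t), Finset.sum_range_succ',
    pow_zero, one_mul, Nat.sub_zero, Nat.sub_zero, sub_add_cancel_right, ← Finset.sum_neg_distrib,
    Finset.range_eq_Ico, Finset.sum_Ico_add' (fun t =>
      -(((-1 : K) ^ t * ((b - t).choose (k - t) : K)) • z t)) 0 k 1]
  refine Finset.sum_congr rfl fun t ht => ?_
  obtain ⟨ht1, htk⟩ := Finset.mem_Icc.1 ht
  obtain ⟨s, rfl⟩ := Nat.exists_eq_add_of_le' ht1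
  rw [psiCoeff, Nat.add_sub_cancel, ← neg_smul, pow_succ, mul_neg_one, neg_mul, neg_neg,
    ← Nat.choose_symm (n := b - (s + 1)) (k := k - (s + 1)) (by lia),
    show b - (s + 1) - (k - (s + 1)) = b - k by lia]

theorem stringOp_map_inl_mul_map_inr [CharZero K] {M : Type*} [AddCommGroup M] [Module K M]
    [Nontrivial M] {b k : ℕ} (hkb : k ≤ b) (x : ExteriorAlgebra K M) (y : ⋀[K]^b M) :
    stringOp (extDer (raise K M)) (extDer (lower K M)) (psiCoeff K b k) b
      (map (.inl K M M) x * map (.inr K M M) y) =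
    (b.choose k : K) • (map (.inl K M M) x * map (.inr K M M) y) -
      (-1 : K) ^ k • exchange k x (y : ExteriorAlgebra K M) := by
  let z (t : ℕ) := hasseDer (lower K M) t (hasseDer (raise K M) t
    (map (.inl K M M) x * map (.inr K M M) y))
  have hzero : z 0 = map (.inl K M M) x * map (.inr K M M) y := by simp [z, hasseDer_zero]
  have hinversion := sum_antidiagonal_choose_smul_inversion (R := K) (y := z)
    (x := fun r => exchange r x (y : ExteriorAlgebra K M)) fun t (ht : t ≤ k) =>
      hasseDer_lower_hasseDer_raise_map_inl_mul_map_inr (ht.trans hkb) x y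
  rw [← hinversion, ← hzero, ← sum_Icc_psiCoeff_smul hkb]
  simp [stringOp, z, divPow_zero, hasseDer_eq_divPow (raise_comp_raise (R := K) (M := M)),
    hasseDer_eq_divPow (lower_comp_lower (R := K) (M := M))]

end ExchangeAsStringOp

section Shuffles

variable {p q : ℕ}

/-- The image of the first `p` indices under a permutation; a `(p, q)`-shuffle is determined by
it. -/
def shuffleHead (σ : Equiv.Perm (Fin (p + q))) : Finset (Fin (p + q)) :=
  Finset.univ.map ((Fin.castAddEmb q).trans σ.toEmbedding)

lemma apply_castAdd_mem_shuffleHead (σ : Equiv.Perm (Fin (p + q))) (i : Fin p) :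
    σ (Fin.castAdd q i) ∈ shuffleHead σ :=
  Finset.mem_map_of_mem _ (Finset.mem_univ i)

lemma apply_natAdd_notMem_shuffleHead (σ : Equiv.Perm (Fin (p + q))) (i : Fin q) :
    σ (Fin.natAdd p i) ∉ shuffleHead σ := by
  simp only [shuffleHead, Finset.mem_map, Finset.mem_univ, true_and, Function.Embedding.trans_apply,
    Equiv.coe_toEmbedding, EmbeddingLike.apply_eq_iff_eq, not_exists, Fin.castAddEmb_apply]
  exact fun j hj => absurd (congrArg Fin.val hj) (by simp; lia)

lemma card_shuffleHead (σ : Equiv.Perm (Fin (p + q))) : (shuffleHead σ).card = p := by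
  rw [shuffleHead, Finset.card_map, Finset.card_univ, Fintype.card_fin]

lemma card_compl_eq_iff (s : Finset (Fin (p + q))) : sᶜ.card = q ↔ s.card = p := by
  have hcard := s.card_add_card_compl
  rw [Fintype.card_fin] at hcard
  lia

lemma shuffle_eq_finSumEquivOfFinset {σ : Equiv.Perm (Fin (p + q))} (hσ : σ ∈ shuffles p q)
    {s : Finset (Fin (p + q))} (hs : s.card = p) (hs' : sᶜ.card = q) (hσs : shuffleHead σ = s) :
    σ = finSumFinEquiv.symm.trans (finSumEquivOfFinset hs hs') := by
  obtain ⟨-, hleft, hright⟩ := Finset.mem_filter.1 hσ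
  have hhead : (fun i => σ (Fin.castAdd q i)) = s.orderEmbOfFin hs :=
    Finset.orderEmbOfFin_unique hs (fun i => hσs ▸ apply_castAdd_mem_shuffleHead σ i)
      fun i j hij => hleft _ _ hij j.2
  have htail : (fun i => σ (Fin.natAdd p i)) = sᶜ.orderEmbOfFin hs' :=
    Finset.orderEmbOfFin_unique hs'
      (fun i => Finset.mem_compl.2 (hσs ▸ apply_natAdd_notMem_shuffleHead σ i))
      fun i j hij => hright _ _ (by simpa using hij) (by simp)
  ext1 x
  induction x using Fin.addCases with
  | left i => simpa using congrFun hhead i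
  | right i => simpa using congrFun htail i

lemma finSumEquivOfFinset_mem_shuffles {s : Finset (Fin (p + q))} (hs : s.card = p)
    (hs' : sᶜ.card = q) :
    finSumFinEquiv.symm.trans (finSumEquivOfFinset hs hs') ∈ shuffles p q := by
  refine Finset.mem_filter.2 ⟨Finset.mem_univ _, fun i j hij hj => ?_, fun i j hij hi => ?_⟩
  · induction i using Fin.addCases with
    | left i =>
      induction j using Fin.addCases with
      | left j =>
        have hij' : i < j := hij
        simpa using hij'
      | right j => simp at hj
    | right i => simp [Fin.lt_def] at hij; lia
  · induction i using Fin.addCases with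
    | left i => exact absurd hi (by simp)
    | right i =>
      induction j using Fin.addCases with
      | left j => simp [Fin.lt_def] at hij; lia
      | right j => simpa using hij

lemma shuffleHead_finSumEquivOfFinset {s : Finset (Fin (p + q))} (hs : s.card = p)
    (hs' : sᶜ.card = q) :
    shuffleHead (finSumFinEquiv.symm.trans (finSumEquivOfFinset hs hs')) = s := by
  refine Finset.eq_of_subset_of_card_le (fun x hx => ?_) (by rw [card_shuffleHead, hs])
  obtain ⟨i, -, rfl⟩ := Finset.mem_map.1 hx
  simp

lemma append_comp_eq_piecewise_shuffleHead {M : Type*} (σ : Equiv.Perm (Fin (p + q)))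
    (v w : Fin (p + q) → M) :
    Fin.append (fun i => v (σ (Fin.castAdd q i))) (fun i => w (σ (Fin.natAdd p i))) =
      (shuffleHead σ).piecewise v w ∘ σ := by
  ext1 x
  induction x using Fin.addCases with
  | left i =>
    rw [Fin.append_left, Function.comp_apply,
      Finset.piecewise_eq_of_mem _ _ _ (apply_castAdd_mem_shuffleHead σ i)]
  | right i =>
    rw [Fin.append_right, Function.comp_apply,
      Finset.piecewise_eq_of_notMem _ _ _ (apply_natAdd_notMem_shuffleHead σ i)]

theorem sum_shuffles_sign_smul {R M N : Type*} [CommRing R] [AddCommGroup M] [Module R M]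
    [AddCommGroup N] [Module R N] (g : M [⋀^Fin (p + q)]→ₗ[R] N) (v w : Fin (p + q) → M) :
    ∑ σ ∈ shuffles p q, (Equiv.Perm.sign σ : ℤ) •
      g (Fin.append (fun i => v (σ (Fin.castAdd q i))) fun i => w (σ (Fin.natAdd p i))) =
    ∑ s : Finset (Fin (p + q)) with sᶜ.card = q, g (s.piecewise v w) := by
  refine Finset.sum_nbij shuffleHead (fun σ _ => ?_) (fun σ hσ σ' hσ' hhead => ?_) (fun s hs => ?_)
    fun σ _ => ?_
  · exact Finset.mem_filter.2
      ⟨Finset.mem_univ _, (card_compl_eq_iff _).2 (card_shuffleHead σ)⟩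
  · have hcard := card_shuffleHead σ'
    rw [shuffle_eq_finSumEquivOfFinset hσ hcard ((card_compl_eq_iff _).2 hcard) hhead,
      ← shuffle_eq_finSumEquivOfFinset hσ' hcard ((card_compl_eq_iff _).2 hcard) rfl]
  · have hs' : sᶜ.card = q := (Finset.mem_filter.1 hs).2
    exact ⟨_, finSumEquivOfFinset_mem_shuffles ((card_compl_eq_iff s).1 hs') hs',
      shuffleHead_finSumEquivOfFinset _ hs'⟩
  · rw [append_comp_eq_piecewise_shuffleHead, AlternatingMap.map_perm, Units.smul_def, smul_smul,
      ← Units.val_mul, Int.units_mul_self, Units.val_one, one_smul]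

end Shuffles

section MultiplicationAndComultiplication

open ExteriorAlgebra

variable {K : Type} [Field K] {n p q p' q' : ℕ}

lemma lam_hom_ext {N : Type*} [AddCommGroup N] [Module K N] {f g : Lam K n p →ₗ[K] N}
    (hfg : ∀ v, f (wedge K n v) = g (wedge K n v)) : f = g :=
  exteriorPower.linearMap_ext (AlternatingMap.ext hfg)

lemma coe_wedge (v : Fin p → V K n) :
    (wedge K n v : ExteriorAlgebra K (V K n)) = ιMulti K p v := rfl

lemma coe_ecast (h : p = q) (x : Lam K n p) :
    (ecast K n h x : ExteriorAlgebra K (V K n)) = x := by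
  subst h
  rfl

lemma biWedge_congr_ecast (hp : p = p') (hq : q = q') (z : Lam K n p ⊗[K] Lam K n q) :
    biWedge K (V K n) (V K n) p' q' (TensorProduct.congr (ecast K n hp) (ecast K n hq) z) =
      biWedge K (V K n) (V K n) p q z := by
  subst hp hq
  rw [ecast, ecast, TensorProduct.congr_refl_refl]
  rfl

lemma IsMulMap.coe_apply_tmul {m : Lam K n p ⊗[K] Lam K n q →ₗ[K] Lam K n (p + q)}
    (hm : IsMulMap K n p q m) (x : Lam K n p) (y : Lam K n q) :
    (m (x ⊗ₜ y) : ExteriorAlgebra K (V K n)) = x * y := by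
  let mulCoe := (LinearMap.mul K (ExteriorAlgebra K (V K n))).compl₁₂
    (⋀[K]^p (V K n)).subtype (⋀[K]^q (V K n)).subtype
  have hmul : (TensorProduct.mk K _ _).compr₂ ((⋀[K]^(p + q) (V K n)).subtype ∘ₗ m) = mulCoe :=
    lam_hom_ext fun v => lam_hom_ext fun w =>
      (congrArg Subtype.val (hm v w)).trans (ιMulti_mul_ιMulti v w).symm
  exact LinearMap.congr_fun₂ hmul x y

lemma IsComulMap.biWedge_apply_wedge {D : Lam K n (p + q) →ₗ[K] Lam K n p ⊗[K] Lam K n q}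
    (hD : IsComulMap K n p q D) (v : Fin (p + q) → V K n) :
    biWedge K (V K n) (V K n) p q (D (wedge K n v)) =
      ∑ s : Finset (Fin (p + q)) with sᶜ.card = q,
        ιMulti K (p + q) (s.piecewise (LinearMap.inl K (V K n) (V K n) ∘ v)
          (LinearMap.inr K (V K n) (V K n) ∘ v)) := by
  rw [← sum_shuffles_sign_smul, hD, map_sum]
  refine Finset.sum_congr rfl fun σ _ => ?_
  rw [map_zsmul, biWedge_tmul, coe_wedge, coe_wedge, map_apply_ιMulti, map_apply_ιMulti,
    ιMulti_mul_ιMulti]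
  rfl

lemma IsComulMap.biWedge_apply_eq_hasseDer_lower
    {D : Lam K n (p + q) →ₗ[K] Lam K n p ⊗[K] Lam K n q} (hD : IsComulMap K n p q D)
    (x : Lam K n (p + q)) :
    biWedge K (V K n) (V K n) p q (D x) =
      hasseDer (lower K (V K n)) q (map (.inl K (V K n) (V K n)) x) := by
  refine LinearMap.congr_fun (f := biWedge K (V K n) (V K n) p q ∘ₗ D)
    (g := hasseDer (lower K (V K n)) q ∘ₗ (map (.inl K (V K n) (V K n))).toLinearMap ∘ₗ
      (⋀[K]^(p + q) (V K n)).subtype) (lam_hom_ext fun v => (hD.biWedge_apply_wedge v).trans ?_) x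
  rw [LinearMap.comp_apply, LinearMap.comp_apply, Submodule.subtype_apply, coe_wedge,
    AlgHom.toLinearMap_apply, map_apply_ιMulti, hasseDer_ιMulti]
  rfl

lemma IsComulMap.biWedge_apply_eq_hasseDer_raise
    {D : Lam K n (p + q) →ₗ[K] Lam K n p ⊗[K] Lam K n q} (hD : IsComulMap K n p q D)
    (x : Lam K n (p + q)) :
    biWedge K (V K n) (V K n) p q (D x) =
      hasseDer (raise K (V K n)) p (map (.inr K (V K n) (V K n)) x) := by
  refine LinearMap.congr_fun (f := biWedge K (V K n) (V K n) p q ∘ₗ D)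
    (g := hasseDer (raise K (V K n)) p ∘ₗ (map (.inr K (V K n) (V K n))).toLinearMap ∘ₗ
      (⋀[K]^(p + q) (V K n)).subtype) (lam_hom_ext fun v => (hD.biWedge_apply_wedge v).trans ?_) x
  rw [LinearMap.comp_apply, LinearMap.comp_apply, Submodule.subtype_apply, coe_wedge,
    AlgHom.toLinearMap_apply, map_apply_ιMulti, hasseDer_ιMulti]
  refine Finset.sum_equiv (compl_involutive.toPerm _) (fun s => ?_) fun s _ => ?_
  · simp [card_compl_eq_iff]
  · rw [Function.Involutive.coe_toPerm, Finset.piecewise_compl]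
    rfl

end MultiplicationAndComultiplication

section SchurRelations

open ExteriorAlgebra

variable {K : Type} [Field K] {n : ℕ}
  {mf : ∀ p q : ℕ, Lam K n p ⊗[K] Lam K n q →ₗ[K] Lam K n (p + q)}
  {Df : ∀ p q : ℕ, Lam K n (p + q) →ₗ[K] Lam K n p ⊗[K] Lam K n q}

lemma biWedge_map_id_mul_assoc {p q r s : ℕ}
    {m : Lam K n q ⊗[K] Lam K n r →ₗ[K] Lam K n (q + r)} (hm : IsMulMap K n q r m) (h : q + r = s)
    (w : Lam K n p ⊗[K] Lam K n q) (y : Lam K n r) :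
    biWedge K (V K n) (V K n) p s
      (TensorProduct.map LinearMap.id ((ecast K n h).toLinearMap ∘ₗ m)
        (TensorProduct.assoc K _ _ _ (w ⊗ₜ y))) =
    biWedge K (V K n) (V K n) p q w * map (.inr K (V K n) (V K n)) y := by
  induction w with
  | zero => simp
  | add w w' hw hw' => simp only [add_tmul, map_add, add_mul, hw, hw']
  | tmul u x =>
    rw [TensorProduct.assoc_tmul, TensorProduct.map_tmul, biWedge_tmul, biWedge_tmul,
      LinearMap.comp_apply, LinearEquiv.coe_coe, coe_ecast, hm.coe_apply_tmul, map_mul, mul_assoc]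
    rfl

lemma biWedge_theta1 (hmf : ∀ p q, IsMulMap K n p q (mf p q))
    (hDf : ∀ p q, IsComulMap K n p q (Df p q)) {a b : ℕ} (hb : 1 ≤ b)
    (z : Lam K n (a + 1) ⊗[K] Lam K n (b - 1)) :
    biWedge K (V K n) (V K n) a b (theta1 K n mf Df a b hb z) =
      extDer (lower K (V K n)) (biWedge K (V K n) (V K n) (a + 1) (b - 1) z) := by
  induction z with
  | zero => simp
  | add z z' hz hz' => simp only [map_add, hz, hz']
  | tmul x y =>
    have hy : extDer (lower K (V K n)) (map (.inr K (V K n) (V K n)) y.1) = 0 :=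
      extDer_map_of_comp_eq_zero lower_comp_inr _
    rw [theta1, thetaMap, LinearMap.comp_apply, LinearEquiv.coe_coe, biWedge_congr_ecast,
      LinearMap.comp_apply, LinearMap.comp_apply, TensorProduct.map_tmul, LinearEquiv.coe_coe,
      LinearMap.id_apply, biWedge_map_id_mul_assoc (hmf _ _), LinearMap.comp_apply,
      (hDf _ _).biWedge_apply_eq_hasseDer_lower, LinearEquiv.coe_coe, coe_ecast, hasseDer_one,
      biWedge_tmul, extDer_mul, hy, mul_zero, add_zero]

lemma map_biWedge_schurRel (hmf : ∀ p q, IsMulMap K n p q (mf p q))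
    (hDf : ∀ p q, IsComulMap K n p q (Df p q)) (a q : ℕ) :
    (schurRel K n mf Df a (q + 1)).map (biWedge K (V K n) (V K n) a (q + 1)) =
      (bidegree K (V K n) (V K n) (a + 1) q).map (extDer (lower K (V K n))) := by
  rw [schurRel, dif_pos (Nat.le_add_left 1 q), ← range_biWedge, ← LinearMap.range_comp,
    ← LinearMap.range_comp]
  exact congrArg LinearMap.range (LinearMap.ext (biWedge_theta1 hmf hDf (Nat.le_add_left 1 q)))

end SchurRelations

section ExchangeMap

open ExteriorAlgebra

variable {K : Type} [Field K] {n : ℕ}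
  {mf : ∀ p q : ℕ, Lam K n p ⊗[K] Lam K n q →ₗ[K] Lam K n (p + q)}
  {Df : ∀ p q : ℕ, Lam K n (p + q) →ₗ[K] Lam K n p ⊗[K] Lam K n q}

lemma biWedge_pairMul_tmul (hmf : ∀ p q, IsMulMap K n p q (mf p q)) {p₁ q₁ p₂ q₂ : ℕ}
    (z : Lam K n p₁ ⊗[K] Lam K n q₁) (w : Lam K n p₂ ⊗[K] Lam K n q₂) :
    biWedge K (V K n) (V K n) _ _ (pairMul K n mf p₁ q₁ p₂ q₂ (z ⊗ₜ w)) =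
      (-1 : K) ^ (q₁ * p₂) •
        (biWedge K (V K n) (V K n) _ _ z * biWedge K (V K n) (V K n) _ _ w) := by
  induction z with
  | zero => simp
  | add z z' hz hz' => simp only [add_tmul, map_add, add_mul, smul_add, hz, hz']
  | tmul x y =>
    induction w with
    | zero => simp
    | add w w' hw hw' => simp only [tmul_add, map_add, mul_add, smul_add, hw, hw']
    | tmul x' y' =>
      have hsign : (-1 : K) ^ (q₁ * p₂) * (-1) ^ (q₁ * p₂) = 1 := by
        rw [← mul_pow, neg_mul_neg, one_mul, one_pow]
      rw [biWedge_tmul_mul_biWedge_tmul, smul_smul, hsign, one_smul, pairMul, LinearMap.comp_apply,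
        LinearEquiv.coe_coe, TensorProduct.tensorTensorTensorComm_tmul, TensorProduct.map_tmul,
        biWedge_tmul, (hmf _ _).coe_apply_tmul, (hmf _ _).coe_apply_tmul]

lemma biWedge_phiSmall_tmul (hmf : ∀ p q, IsMulMap K n p q (mf p q))
    (hDf : ∀ p q, IsComulMap K n p q (Df p q)) {a b k : ℕ} (hka : k ≤ a) (hkb : k ≤ b)
    (x : Lam K n a) (y : Lam K n b) :
    biWedge K (V K n) (V K n) a b (phiSmall K n mf Df a b k hka hkb (x ⊗ₜ y)) =
      (-1 : K) ^ k • exchange k (x : ExteriorAlgebra K (V K n)) y := by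
  have hsign : (-1 : K) ^ (k * k) = (-1) ^ k := by
    rcases Nat.even_or_odd k with hk | hk
    · rw [hk.neg_one_pow, (hk.mul_right k).neg_one_pow]
    · rw [hk.neg_one_pow, (hk.mul hk).neg_one_pow]
  rw [phiSmall, LinearMap.comp_apply, LinearEquiv.coe_coe, biWedge_congr_ecast,
    LinearMap.comp_apply, TensorProduct.map_tmul, biWedge_pairMul_tmul hmf, hsign,
    LinearMap.comp_apply, (hDf _ _).biWedge_apply_eq_hasseDer_lower, LinearMap.comp_apply,
    (hDf _ _).biWedge_apply_eq_hasseDer_raise, LinearEquiv.coe_coe, LinearEquiv.coe_coe, coe_ecast,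
    coe_ecast, exchange]

lemma biWedge_psiSmall [CharZero K] [Nontrivial (V K n)] (hmf : ∀ p q, IsMulMap K n p q (mf p q))
    (hDf : ∀ p q, IsComulMap K n p q (Df p q)) {a b k : ℕ} (hka : k ≤ a) (hkb : k ≤ b)
    (z : Lam K n a ⊗[K] Lam K n b) :
    biWedge K (V K n) (V K n) a b (psiSmall K n mf Df a b k hka hkb z) =
      stringOp (extDer (raise K (V K n))) (extDer (lower K (V K n))) (psiCoeff K b k) b
        (biWedge K (V K n) (V K n) a b z) := by
  induction z with
  | zero => simp
  | add z z' hz hz' => simp only [map_add, hz, hz']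
  | tmul x y =>
    rw [psiSmall, LinearMap.sub_apply, LinearMap.smul_apply, LinearMap.id_apply, map_sub, map_smul,
      biWedge_phiSmall_tmul hmf hDf, biWedge_tmul, stringOp_map_inl_mul_map_inr hkb]

lemma map_biWedge_range_psiSmall [CharZero K] [Nontrivial (V K n)]
    (hmf : ∀ p q, IsMulMap K n p q (mf p q)) (hDf : ∀ p q, IsComulMap K n p q (Df p q)) {a b k : ℕ}
    (hka : k ≤ a) (hkb : k ≤ b) :
    (LinearMap.range (psiSmall K n mf Df a b k hka hkb)).map (biWedge K (V K n) (V K n) a b) =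
      (bidegree K (V K n) (V K n) a b).map
        (stringOp (extDer (raise K (V K n))) (extDer (lower K (V K n))) (psiCoeff K b k) b) := by
  rw [← range_biWedge, ← LinearMap.range_comp, ← LinearMap.range_comp]
  exact congrArg LinearMap.range (LinearMap.ext (biWedge_psiSmall hmf hDf hka hkb))

end ExchangeMap

section Equivariance

open ExteriorAlgebra

variable {K : Type} [Field K] {n : ℕ}
  {rho : ∀ p : ℕ, GLn K n → (Lam K n p →ₗ[K] Lam K n p)}

lemma IsExtAction.coe_apply (hrho : IsExtAction K n rho) {p : ℕ} (g : GLn K n) (x : Lam K n p) :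
    (rho p g x : ExteriorAlgebra K (V K n)) =
      map (Matrix.toLin' (g : Matrix (Fin n) (Fin n) K)) x.1 := by
  refine LinearMap.congr_fun (f := (⋀[K]^p (V K n)).subtype ∘ₗ rho p g)
    (g := (map (Matrix.toLin' (g : Matrix (Fin n) (Fin n) K))).toLinearMap ∘ₗ
      (⋀[K]^p (V K n)).subtype) (lam_hom_ext fun v => ?_) x
  rw [LinearMap.comp_apply, hrho, LinearMap.comp_apply, Submodule.subtype_apply,
    Submodule.subtype_apply, coe_wedge, coe_wedge, AlgHom.toLinearMap_apply, map_apply_ιMulti]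
  rfl

lemma IsExtAction.biWedge_rhoT (hrho : IsExtAction K n rho) {a b : ℕ} (g : GLn K n)
    (z : Lam K n a ⊗[K] Lam K n b) :
    biWedge K (V K n) (V K n) a b (rhoT K n rho a b g z) =
      map ((Matrix.toLin' (g : Matrix (Fin n) (Fin n) K)).prodMap
        (Matrix.toLin' (g : Matrix (Fin n) (Fin n) K))) (biWedge K (V K n) (V K n) a b z) := by
  induction z with
  | zero => simp
  | add z z' hz hz' => simp only [map_add, hz, hz']
  | tmul x y =>
    have hinl (f : Module.End K (V K n)) : f.prodMap f ∘ₗ .inl K _ _ = .inl K _ _ ∘ₗ f := by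
      ext <;> simp
    have hinr (f : Module.End K (V K n)) : f.prodMap f ∘ₗ .inr K _ _ = .inr K _ _ ∘ₗ f := by
      ext <;> simp
    rw [rhoT, TensorProduct.map_tmul, biWedge_tmul, biWedge_tmul, hrho.coe_apply, hrho.coe_apply,
      map_mul]
    simp only [← AlgHom.comp_apply, map_comp_map, hinl, hinr]

lemma IsExtAction.schurRel_le_comap_rhoT (hrho : IsExtAction K n rho)
    {mf : ∀ p q : ℕ, Lam K n p ⊗[K] Lam K n q →ₗ[K] Lam K n (p + q)}
    {Df : ∀ p q : ℕ, Lam K n (p + q) →ₗ[K] Lam K n p ⊗[K] Lam K n q}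
    (hmf : ∀ p q, IsMulMap K n p q (mf p q)) (hDf : ∀ p q, IsComulMap K n p q (Df p q)) {a b : ℕ}
    (g : GLn K n) :
    schurRel K n mf Df a b ≤ (schurRel K n mf Df a b).comap (rhoT K n rho a b g) := by
  rw [schurRel]
  split_ifs with hb
  · rintro _ ⟨z, rfl⟩
    refine ⟨rhoT K n rho (a + 1) (b - 1) g z, biWedge_injective a b ?_⟩
    rw [hrho.biWedge_rhoT, biWedge_theta1 hmf hDf, biWedge_theta1 hmf hDf, hrho.biWedge_rhoT,
      ← hasseDer_one, hasseDer_map]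
    ext <;> simp [lower]
  · exact bot_le

end Equivariance

section QuotientIsomorphism

lemma isQuotIso_iff_eq {K G M : Type} [Field K] [AddCommGroup M] [Module K M] [Module.Finite K M]
    {N₁ N₂ : Submodule K M} (hle : N₁ ≤ N₂) {ρ : G → M →ₗ[K] M} (hρ : ∀ g, N₂ ≤ N₂.comap (ρ g)) :
    IsQuotIso K N₁ N₂ ρ ρ ↔ N₁ = N₂ := by
  constructor
  · rintro ⟨e, -⟩
    refine Submodule.eq_of_le_of_finrank_eq hle ?_
    have hquot := e.finrank_eq
    have hN₁ := N₁.finrank_quotient_add_finrank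
    have hN₂ := N₂.finrank_quotient_add_finrank
    lia
  · rintro rfl
    refine ⟨LinearEquiv.refl K _, fun g x y hxy => ?_⟩
    rw [LinearEquiv.refl_apply, Submodule.Quotient.eq] at hxy ⊢
    rw [← map_sub]
    exact hρ g hxy

end QuotientIsomorphism

section CokernelOfPsi

variable {K : Type} [Field K] [CharZero K] {n : ℕ}
  {mf : ∀ p q : ℕ, Lam K n p ⊗[K] Lam K n q →ₗ[K] Lam K n (p + q)}
  {Df : ∀ p q : ℕ, Lam K n (p + q) →ₗ[K] Lam K n p ⊗[K] Lam K n q}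

lemma range_psiSmall_le_schurRel [Nontrivial (V K n)] (hmf : ∀ p q, IsMulMap K n p q (mf p q))
    (hDf : ∀ p q, IsComulMap K n p q (Df p q)) {a q k : ℕ} (hka : k ≤ a) (hkq : k ≤ q + 1) :
    LinearMap.range (psiSmall K n mf Df a (q + 1) k hka hkq) ≤ schurRel K n mf Df a (q + 1) := by
  rw [← Submodule.map_le_map_iff_of_injective (biWedge_injective a (q + 1)),
    map_biWedge_range_psiSmall hmf hDf, map_biWedge_schurRel hmf hDf]
  exact isBigradedSl2_bidegree.map_stringOp_le_map_f _

lemma range_psiSmall_eq_schurRel_iff [Nontrivial (V K n)] (hmf : ∀ p q, IsMulMap K n p q (mf p q))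
    (hDf : ∀ p q, IsComulMap K n p q (Df p q)) {a q k : ℕ} (hqa : q + 1 ≤ a) (hkq : k ≤ q + 1) :
    LinearMap.range (psiSmall K n mf Df a (q + 1) k (hkq.trans hqa) hkq) =
        schurRel K n mf Df a (q + 1) ↔
      ∀ j, 1 ≤ j → j ≤ q + 1 → a + j ≤ n →
        stringEigenvalue (psiCoeff K (q + 1) k) (a - (q + 1)) j ≠ 0 := by
  rw [← (Submodule.map_injective_of_injective (biWedge_injective a (q + 1))).eq_iff,
    map_biWedge_range_psiSmall hmf hDf, map_biWedge_schurRel hmf hDf,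
    isBigradedSl2_bidegree.map_stringOp_eq_map_f_iff _ hqa]
  have hprim (i d : ℕ) (hd : d + i = q) := by
    simpa only [Module.finrank_fin_fun] using exists_mem_bidegree_extDer_raise_eq_zero_iff
      (K := K) (M := V K n) (show d ≤ a + (i + 1) by lia)
  refine ⟨fun hne j hj1 hjq hjn => ?_, fun hne i d hd hv => ?_⟩
  · obtain ⟨i, rfl⟩ := Nat.exists_eq_add_of_le' hj1
    have hd : q - i + i = q := by lia
    exact hne i (q - i) hd ((hprim i _ hd).2 hjn)
  · exact hne (i + 1) (by lia) (by lia) ((hprim i d hd).1 hv)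

theorem statement8_general {a b k : ℕ} (hn : 1 ≤ n) (hb : 1 ≤ b) (hba : b ≤ a) (hkb : k ≤ b)
    (hmf : ∀ p q, IsMulMap K n p q (mf p q)) (hDf : ∀ p q, IsComulMap K n p q (Df p q))
    {rho : ∀ p : ℕ, GLn K n → (Lam K n p →ₗ[K] Lam K n p)} (hrho : IsExtAction K n rho) :
    IsQuotIso K
        (LinearMap.range (psiSmall K n mf Df a b k (hkb.trans hba) hkb))
        (schurRel K n mf Df a b)
        (rhoT K n rho a b) (rhoT K n rho a b) ↔
      ∀ j : ℕ, 1 ≤ j → j ≤ b → a + j ≤ n →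
        (∑ t ∈ Finset.Icc 1 j,
          (-1 : K) ^ (t - 1) * ((b - t).choose (b - k) : K) * (j.choose t : K) *
            ((a - b + j + t).choose t : K)) ≠ 0 := by
  have : NeZero n := ⟨by lia⟩
  obtain ⟨q, rfl⟩ := Nat.exists_eq_add_of_le' hb
  rw [isQuotIso_iff_eq (range_psiSmall_le_schurRel hmf hDf _ hkb)
      fun g => hrho.schurRel_le_comap_rhoT hmf hDf g,
    range_psiSmall_eq_schurRel_iff hmf hDf hba hkb]
  simp only [stringEigenvalue, psiCoeff, mul_assoc]

end CokernelOfPsi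

/-- Corollary 4.4 of the paper: for `a ≥ b ≥ k ≥ 1` and `n ≥ a+b`,
`coker(ψ_k) ≅ L_{(a,b)}` as `G`-modules iff
`Σ_{t=1}^{j} (−1)^{t−1} C(b−t,b−k) C(j,t) C(a−b+j+t,t) ≠ 0` for all `j = 1, …, b`. -/
theorem statement8 (K : Type) [Field K] [CharZero K] (n : ℕ)
    (a b k : ℕ) (hba : b ≤ a) (hk1 : 1 ≤ k) (hkb : k ≤ b) (hn : a + b ≤ n)
    (mf : ∀ p q : ℕ, Lam K n p ⊗[K] Lam K n q →ₗ[K] Lam K n (p+q))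
    (Df : ∀ p q : ℕ, Lam K n (p+q) →ₗ[K] Lam K n p ⊗[K] Lam K n q)
    (hmf : ∀ p q, IsMulMap K n p q (mf p q))
    (hDf : ∀ p q, IsComulMap K n p q (Df p q))
    (rho : ∀ p : ℕ, GLn K n → (Lam K n p →ₗ[K] Lam K n p))
    (hrho : IsExtAction K n rho) :
    IsQuotIso K
        (LinearMap.range (psiSmall K n mf Df a b k (hkb.trans hba) hkb))
        (schurRel K n mf Df a b)
        (rhoT K n rho a b) (rhoT K n rho a b) ↔
      ∀ j : ℕ, 1 ≤ j → j ≤ b →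
        (∑ t ∈ Finset.Icc 1 j,
          (-1:K)^(t-1) * ((b-t).choose (b-k) : K) * (j.choose t : K) *
            ((a-b+j+t).choose t : K)) ≠ 0 := by
  rw [statement8_general (by lia) (hk1.trans hkb) hba hkb hmf hDf hrho]
  exact forall₃_congr fun j _ hjb => forall_prop_of_true (by lia)

end MMS
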